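/- Let ρ : S² → S² be a continuous map of degree k ≥ 1. Then the set {p ∈ S² : the fiber ρ⁻¹(p) has fewer than k elements} is finite. -/

import Mathlib

open scoped Topology Topology.Homotopy unitInterval

noncomputable section

/-- The 2-sphere `S²`, as the unit sphere in Euclidean 3-space. -/
abbrev Sphere2 : Type := Metric.sphere (0 : EuclideanSpace ℝ (Fin 3)) 1

/-- The map induced by a continuous map `ρ` on second homotopy groups,
`π₂(X, b) → π₂(Y, ρ b)`, given by postcomposition. -/
noncomputable def piTwoMap {X Y : Type*} [TopologicalSpace X] [TopologicalSpace Y]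
    (ρ : C(X, Y)) (b : X) :
    HomotopyGroup (Fin 2) X b → HomotopyGroup (Fin 2) Y (ρ b) :=
  Quotient.map
    (fun p => ⟨ρ.comp p.1, fun y hy => by
      simp only [ContinuousMap.comp_apply]
      rw [p.2 y hy]⟩)
    (fun p q h => by
      obtain ⟨H⟩ := h
      exact ⟨H.compContinuousMap ρ⟩)

/-- A continuous self-map `ρ` of `S²` has degree `k` if the induced map on
`π₂(S²) ≅ H₂(S²; ℤ) ≅ ℤ` is multiplication by `k` (written multiplicatively,
`γ ↦ γ ^ k`). -/
def HasDegree (ρ : C(Sphere2, Sphere2)) (k : ℤ) : Prop :=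
  ∃ (b : Sphere2) (e : HomotopyGroup (Fin 2) Sphere2 b ≃* Multiplicative ℤ)
    (e' : HomotopyGroup (Fin 2) Sphere2 (ρ b) ≃* Multiplicative ℤ),
    ∀ γ : HomotopyGroup (Fin 2) Sphere2 b, e' (piTwoMap ρ b γ) = (e γ) ^ k

namespace SF

/-- piecewise linear function on the unit interval -/
def hh (K u : ℝ) : ℝ := min (K * u) (1 - (1 - u) / K)
def hk (K u : ℝ) : ℝ := max (u / K) (1 - K * (1 - u))

lemma hk_hh {K u : ℝ} (hK : 1 ≤ K) : hk K (hh K u) = u := by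
  have hK0 : (0:ℝ) < K := by linarith
  unfold hk hh
  rcases le_total (K * u) (1 - (1 - u) / K) with h | h
  · rw [min_eq_left h, max_eq_left]
    · field_simp
    · have : (1 - u) / K ≤ 1 - K * u := by linarith
      rw [div_le_iff₀ hK0] at this
      have e : K * u / K = u := by field_simp
      rw [e]; nlinarith
  · rw [min_eq_right h, max_eq_right]
    · field_simp; ring
    · have : 1 - K * u ≤ (1 - u) / K := by linarith
      rw [le_div_iff₀ hK0] at this
      have e : 1 - K * (1 - (1 - (1 - u) / K)) = u := by field_simp; ring
      rw [e, div_le_iff₀ hK0]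
      have h2 : (1 - u) / K * K = 1 - u := by field_simp
      nlinarith

lemma hh_hk {K u : ℝ} (hK : 1 ≤ K) : hh K (hk K u) = u := by
  have hK0 : (0:ℝ) < K := by linarith
  unfold hk hh
  rcases le_total (u / K) (1 - K * (1 - u)) with h | h
  · rw [max_eq_right h, min_eq_right]
    · field_simp; ring
    · rw [div_le_iff₀ hK0] at h
      have e : 1 - (1 - (1 - K * (1 - u))) / K = u := by field_simp; ring
      rw [e]; nlinarith
  · rw [max_eq_left h, min_eq_left]
    · field_simp
    · rw [le_div_iff₀ hK0] at h
      have e : K * (u / K) = u := by field_simp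
      rw [e]
      have : (1 - u / K) / K ≤ 1 - u := by
        rw [div_le_iff₀ hK0]
        have : 1 - K * (1 - u) ≤ u / K := by rw [le_div_iff₀ hK0]; exact h
        linarith
      linarith

lemma hh_mem {K u : ℝ} (hK : 1 ≤ K) (h0 : 0 ≤ u) (h1 : u < 1) : 0 ≤ hh K u ∧ hh K u < 1 := by
  have hK0 : (0:ℝ) < K := by linarith
  unfold hh
  constructor
  · apply le_min (by positivity)
    have : (1 - u) / K ≤ 1 := by rw [div_le_iff₀ hK0]; linarith
    linarith
  · apply min_lt_of_right_lt
    have : 0 < (1 - u) / K := div_pos (by linarith) hK0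
    linarith

lemma hk_mem {K u : ℝ} (hK : 1 ≤ K) (h0 : 0 ≤ u) (h1 : u < 1) : 0 ≤ hk K u ∧ hk K u < 1 := by
  have hK0 : (0:ℝ) < K := by linarith
  unfold hk
  constructor
  · exact le_max_of_le_left (by positivity)
  · apply max_lt
    · rw [div_lt_iff₀ hK0]; linarith
    · have : 0 < K * (1 - u) := by apply mul_pos hK0; linarith
      linarith

lemma hh_strictMono {K : ℝ} (hK : 1 ≤ K) : StrictMono (hh K) := by
  have hK0 : (0:ℝ) < K := by linarith
  intro u v huv
  unfold hh
  apply min_lt_min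
  · nlinarith
  · have : (1 - v) / K < (1 - u) / K := by gcongr
    linarith

/-- periodic extension of a map of the unit interval -/
def per (h : ℝ → ℝ) (t : ℝ) : ℝ := ⌊t⌋ + h (Int.fract t)

lemma per_add_one (h : ℝ → ℝ) (t : ℝ) : per h (t + 1) = per h t + 1 := by
  simp [per]; ring

lemma per_per {h k : ℝ → ℝ} (hm : ∀ u, 0 ≤ u → u < 1 → 0 ≤ h u ∧ h u < 1)
    (hi : ∀ u, k (h u) = u) (t : ℝ) : per k (per h t) = t := by
  obtain ⟨h0, h1⟩ := hm _ (Int.fract_nonneg t) (Int.fract_lt_one t)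
  have e1 : ⌊(⌊t⌋ + h (Int.fract t) : ℝ)⌋ = ⌊t⌋ := by
    rw [Int.floor_intCast_add, Int.floor_eq_zero_iff.2 ⟨h0, h1⟩, add_zero]
  have e2 : Int.fract (⌊t⌋ + h (Int.fract t) : ℝ) = h (Int.fract t) := by
    rw [Int.fract_intCast_add, Int.fract_eq_self.2 ⟨h0, h1⟩]
  simp only [per, e1, e2, hi]
  exact Int.floor_add_fract t

lemma per_strictMono {h : ℝ → ℝ} (hm : ∀ u, 0 ≤ u → u < 1 → 0 ≤ h u ∧ h u < 1)
    (hs : StrictMono h) : StrictMono (per h) := by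
  intro s t hst
  unfold per
  rcases (Int.floor_mono hst.le).lt_or_eq with hl | hl
  · have h1 := (hm _ (Int.fract_nonneg s) (Int.fract_lt_one s)).2
    have h2 := (hm _ (Int.fract_nonneg t) (Int.fract_lt_one t)).1
    have : (⌊s⌋ : ℝ) + 1 ≤ ⌊t⌋ := by exact_mod_cast hl
    linarith
  · have : Int.fract s < Int.fract t := by
      unfold Int.fract; rw [hl]; linarith
    have := hs this
    rw [hl]; linarith

def ff (K : ℝ) (hK : 1 ≤ K) : ℝ ≃o ℝ where
  toFun := per (hh K)
  invFun := per (hk K)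
  left_inv := per_per (fun _ => hh_mem hK) (fun _ => hk_hh hK)
  right_inv := per_per (fun _ => hk_mem hK) (fun _ => hh_hk hK)
  map_rel_iff' := (per_strictMono (fun _ => hh_mem hK) (hh_strictMono hK)).le_iff_le

lemma ff_apply (K : ℝ) (hK : 1 ≤ K) (t : ℝ) : ff K hK t = per (hh K) t := rfl

/-- The existence of the transition functions. -/
theorem exists_gs (r : ℕ) (hr : 1 ≤ r) : ∃ g : ℕ → (ℝ ≃o ℝ), (∀ j t, g j (t + 1) = g j t + 1) ∧
    (∀ t, g 0 t = t) ∧ (∀ j, ∃ s, g j s = g (j+1) s) ∧ ∃ t0, g r t0 = t0 + ((r : ℝ) - 1) := by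
  have hr' : (1:ℝ) ≤ r := by exact_mod_cast hr
  have hK : (1:ℝ) ≤ 2 * r - 1 := by linarith
  set f := ff (2 * r - 1) hK with hf
  set x : ℝ := 1 / (2 * r) with hx
  have fx : f x = x + (1 - 1 / r) := by
    have hx0 : 0 ≤ x := by positivity
    have hx1 : x < 1 := by rw [hx, div_lt_one (by positivity)]; linarith
    rw [hf, ff_apply, per, Int.floor_eq_zero_iff.2 ⟨hx0, hx1⟩, Int.fract_eq_self.2 ⟨hx0, hx1⟩]
    have : hh (2 * r - 1) x = 1 - x := by
      unfold hh
      have hne : (2 * (r:ℝ) - 1) ≠ 0 := by linarith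
      have e1 : (2 * (r:ℝ) - 1) * x = 1 - x := by rw [hx]; field_simp
      have e2 : 1 - (1 - x) / (2 * (r:ℝ) - 1) = 1 - x := by rw [← e1]; field_simp; exact e1.symm
      rw [e1, e2, min_self]
    rw [this, hx]; push_cast; field_simp; ring
  have f0 : f 0 = 0 := by
    rw [hf, ff_apply]; simp [per, hh]
    have : (2 * (r:ℝ) - 1)⁻¹ ≤ 1 := inv_le_one_of_one_le₀ hK
    exact this
  have f1 : ∀ t, f (t + 1) = f t + 1 := fun t => by rw [hf]; exact per_add_one _ t
  let g : ℕ → (ℝ ≃o ℝ) := fun j => Nat.rec (OrderIso.refl ℝ)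
    (fun j gj => gj.trans ((OrderIso.addRight (-(j * (1 - 1/(r:ℝ))))).trans
      (f.trans (OrderIso.addRight (j * (1 - 1/(r:ℝ))))))) j
  have gs : ∀ j t, g (j+1) t = f (g j t + -(j * (1 - 1/(r:ℝ)))) + j * (1 - 1/(r:ℝ)) :=
    fun j t => rfl
  refine ⟨g, ?_, fun t => rfl, ?_, x, ?_⟩
  · intro j
    induction j with
    | zero => intro t; rfl
    | succ j ih => intro t; rw [gs, gs, ih, add_right_comm, f1]; ring
  · intro j
    refine ⟨(g j).symm (j * (1 - 1/(r:ℝ))), ?_⟩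
    rw [gs, OrderIso.apply_symm_apply]
    simp [f0]
  · have : ∀ j : ℕ, g j x = x + j * (1 - 1/(r:ℝ)) := by
      intro j
      induction j with
      | zero => show x = _; simp
      | succ j ih =>
        rw [gs, ih, add_neg_cancel_right, fx]; push_cast; ring
    rw [this]; field_simp

end SF

namespace SF

/-- The reals with the discrete topology. -/
def Rd : Type := ℝ

instance : TopologicalSpace Rd := ⊥
instance : DiscreteTopology Rd := ⟨rfl⟩

/-- A covering space whose fibres are ordered lines, with integer shifts. -/
structure Cov (N : Type) [TopologicalSpace N] where
  E : Type
  top : TopologicalSpace E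
  π : E → N
  cov : IsCoveringMap π
  val : E → ℝ
  ext : ∀ e e', π e = π e' → val e = val e' → e = e'
  sec : ∀ z t, ∃ e, π e = z ∧ val e = t
  sh : ℤ → E → E
  sh_cont : ∀ l, Continuous (sh l)
  π_sh : ∀ l e, π (sh l e) = π e
  val_sh : ∀ l e, val (sh l e) = val e + l
  mono : ∀ (A : Type) [TopologicalSpace A] [PreconnectedSpace A] (f f' : A → E), Continuous f →
    Continuous f' → (∀ x, π (f x) = π (f' x)) → ∀ x y, val (f x) < val (f' x) → 
      val (f y) < val (f' y)

attribute [instance] Cov.top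

section core
variable {ι N : Type} [TopologicalSpace N] (Z : FiberBundleCore ι N Rd)

def vl (e : Z.TotalSpace) : ℝ := e.2
def cc (i j : ι) (z : N) (t : ℝ) : ℝ := Z.coordChange i j z t
def sc (i : ι) (t : ℝ) (z : N) : Z.TotalSpace := ⟨z, cc Z i (Z.indexAt z) z t⟩

lemma sc_cont (i : ι) (t : ℝ) : ContinuousOn (sc Z i t) (Z.baseSet i) := by
  have h1 : ContinuousOn (fun z : N => ((Z.localTriv i).toOpenPartialHomeomorph.symm (z, (t : Rd))))
      (Z.baseSet i) := by
    refine (Z.localTriv i).toOpenPartialHomeomorph.symm.continuousOn.comp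
      (by fun_prop) ?_
    intro z hz
    simpa using hz
  refine h1.congr ?_
  intro z hz
  exact (FiberBundleCore.localTriv_symm_apply Z i (z, (t : Rd))).symm

lemma cc_comp {i j k : ι} {z : N} (hi : z ∈ Z.baseSet i) (hj : z ∈ Z.baseSet j)
    (hk : z ∈ Z.baseSet k) (t : ℝ) : cc Z j k z (cc Z i j z t) = cc Z i k z t :=
  Z.coordChange_comp i j k z ⟨⟨hi, hj⟩, hk⟩ t

lemma cc_self {i : ι} {z : N} (hi : z ∈ Z.baseSet i) (t : ℝ) : cc Z i i z t = t :=
  Z.coordChange_self i z hi t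

lemma sc_eq {i j : ι} {z : N} (hi : z ∈ Z.baseSet i) (hj : z ∈ Z.baseSet j) (t s : ℝ)
    (h : cc Z i j z t = s) : sc Z i t z = sc Z j s z := by
  subst h
  simp only [sc, cc_comp Z hi hj (Z.mem_baseSet_at z)]

lemma eq_sc (e : Z.TotalSpace) {i : ι} (hi : e.1 ∈ Z.baseSet i) :
    e = sc Z i (cc Z (Z.indexAt e.1) i e.1 (vl Z e)) e.1 := by
  have : cc Z i (Z.indexAt e.1) e.1 (cc Z (Z.indexAt e.1) i e.1 (vl Z e)) = vl Z e := by
    rw [cc_comp Z (Z.mem_baseSet_at _) hi (Z.mem_baseSet_at _), cc_self Z (Z.mem_baseSet_at _)]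
  simp only [sc, this]
  rfl

/-- chart coordinate -/
def crd (i : ι) (e : Z.TotalSpace) : ℝ := cc Z (Z.indexAt e.1) i e.1 (vl Z e)

lemma crd_loc (i : ι) (e : Z.TotalSpace) (hi : e.1 ∈ Z.baseSet i) :
    ∀ᶠ e' in 𝓝 e, e'.1 ∈ Z.baseSet i ∧ crd Z i e' = crd Z i e := by
  have hs : e ∈ (Z.localTriv i).source := by simpa using hi
  have h1 : ContinuousAt (Z.localTriv i) e :=
    (Z.localTriv i).continuousOn_toFun.continuousAt ((Z.localTriv i).open_source.mem_nhds hs)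
  have h2 : ContinuousAt (fun e' => ((Z.localTriv i) e').2) e := h1.snd
  have h3 : ∀ᶠ e' in 𝓝 e, (Z.localTriv i e').2 = (Z.localTriv i e).2 :=
    h2.eventually (p := fun v : Rd => v = (Z.localTriv i e).2) (by
      rw [nhds_discrete]; simp)
  filter_upwards [h3, (Z.localTriv i).open_source.mem_nhds hs] with e' h h'
  refine ⟨by simpa using h', ?_⟩
  rw [FiberBundleCore.localTriv_apply, FiberBundleCore.localTriv_apply] at h
  exact h

lemma cc_int
    (h1 : ∀ i j z t, z ∈ Z.baseSet i → z ∈ Z.baseSet j → cc Z i j z (t + 1) = cc Z i j z t + 1)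
    {i j : ι} {z : N} (hi : z ∈ Z.baseSet i) (hj : z ∈ Z.baseSet j) (t : ℝ) (l : ℤ) :
    cc Z i j z (t + l) = cc Z i j z t + l := by
  have hnat : ∀ (n : ℕ) (t : ℝ), cc Z i j z (t + n) = cc Z i j z t + n := by
    intro n
    induction n with
    | zero => intro t; simp
    | succ n ih => intro t; push_cast; rw [← add_assoc, h1 _ _ _ _ hi hj, ih]; ring
  obtain ⟨n, rfl | rfl⟩ := l.eq_nat_or_neg
  · exact_mod_cast hnat n t
  · have := hnat n (t + ((-(n:ℤ) : ℤ) : ℝ))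
    push_cast at this ⊢
    rw [neg_add_cancel_right] at this
    linarith

def shf (l : ℤ) (e : Z.TotalSpace) : Z.TotalSpace := ⟨e.1, (vl Z e + (l : ℝ) : ℝ)⟩

lemma shf_cont
    (h1 : ∀ i j z t, z ∈ Z.baseSet i → z ∈ Z.baseSet j → cc Z i j z (t + 1) = cc Z i j z t + 1)
    (l : ℤ) : Continuous (shf Z l) := by
  rw [continuous_iff_continuousAt]
  intro e
  set i := Z.indexAt e.1 with hi
  have he : e.1 ∈ Z.baseSet i := Z.mem_baseSet_at _
  have hc : ContinuousAt (fun e' : Z.TotalSpace => sc Z i (crd Z i e + l) e'.1) e := by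
    refine ContinuousAt.comp (f := fun e' : Z.TotalSpace => e'.1) (g := sc Z i (crd Z i e + l)) ?_
      Z.continuous_proj.continuousAt
    exact (sc_cont Z i _).continuousAt ((Z.isOpen_baseSet i).mem_nhds he)
  refine hc.congr ?_
  filter_upwards [crd_loc Z i e he] with e' h
  rw [eq_sc Z (shf Z l e') (i := i) h.1]
  show _ = sc Z i (cc Z (Z.indexAt e'.1) i e'.1 (vl Z e' + l)) e'.1
  rw [cc_int Z h1 (Z.mem_baseSet_at _) h.1, ← h.2]
  rfl

/-- The covering obtained from an order preserving cocycle. -/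
def mkCov
    (hm : ∀ i j z, z ∈ Z.baseSet i → z ∈ Z.baseSet j → StrictMono (cc Z i j z))
    (h1 : ∀ i j z t, z ∈ Z.baseSet i → z ∈ Z.baseSet j → cc Z i j z (t + 1) = cc Z i j z t + 1) : Cov N where
  E := Z.TotalSpace
  top := inferInstance
  π := Z.proj
  cov := FiberBundle.isCoveringMap (F := Rd) (E := Z.Fiber)
  val := vl Z
  ext := by
    rintro ⟨z, t⟩ ⟨z', t'⟩ h h'
    change z = z' at h
    subst h
    change t = t' at h'
    subst h'
    rfl
  sec := fun z t => ⟨⟨z, t⟩, rfl, rfl⟩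
  sh := shf Z
  sh_cont := shf_cont Z h1
  π_sh := fun _ _ => rfl
  val_sh := fun _ _ => rfl
  mono := by
    intro A _ _ f f' hf hf' hp x y hx
    have hl : IsLocallyConstant (fun x => vl Z (f x) < vl Z (f' x)) := by
      rw [IsLocallyConstant.iff_eventually_eq]
      intro x
      set i := Z.indexAt (f x).1
      have he : (f x).1 ∈ Z.baseSet i := Z.mem_baseSet_at _
      have he' : (f' x).1 ∈ Z.baseSet i := by
        have : (f x).1 = (f' x).1 := hp x
        rw [← this]; exact he
      have key : ∀ x, (f x).1 ∈ Z.baseSet i → 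
          ((vl Z (f x) < vl Z (f' x)) ↔ crd Z i (f x) < crd Z i (f' x)) := by
        intro x hx
        have : (f x).1 = (f' x).1 := hp x
        unfold crd
        rw [← this]
        exact ((hm _ _ _ (Z.mem_baseSet_at _) hx).lt_iff_lt).symm
      filter_upwards [hf.continuousAt.eventually (crd_loc Z i (f x) he),
        hf'.continuousAt.eventually (crd_loc Z i (f' x) he')] with y hy hy'
      rw [eq_iff_iff, key y hy.1, key x he, hy.2, hy'.2]
    have := hl.apply_eq_of_preconnectedSpace x y
    exact this ▸ hx

end core

end SF

namespace SF

/-- The punctured plane. -/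
abbrev NN {r : ℕ} (zz : Fin r → ℂ) : Type := {z : ℂ // ∀ i, z ≠ zz i}

def JJ {r : ℕ} (zz : Fin r → ℂ) (z : ℂ) : ℕ :=
  (Finset.univ.filter (fun i => (zz i).re < z.re)).card

def bS {r : ℕ} (zz : Fin r → ℂ) : Bool → Set (NN zz)
  | true => {z | ∀ i, z.1.re = (zz i).re → (zz i).im < z.1.im}
  | false => {z | ∀ i, z.1.re = (zz i).re → z.1.im < (zz i).im}

lemma bS_open {r : ℕ} (zz : Fin r → ℂ) (b : Bool) : IsOpen (bS zz b) := by
  have hre : Continuous (fun z : NN zz => z.1.re) := Complex.continuous_re.comp continuous_subtype_val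
  have him : Continuous (fun z : NN zz => z.1.im) := Complex.continuous_im.comp continuous_subtype_val
  cases b
  · simp only [bS, Set.ofPred_forall]
    refine isOpen_iInter_of_finite fun i => ?_
    simp only [imp_iff_not_or, Set.ofPred_or]
    exact (isOpen_ne_fun hre continuous_const).union (isOpen_lt him continuous_const)
  · simp only [bS, Set.ofPred_forall]
    refine isOpen_iInter_of_finite fun i => ?_
    simp only [imp_iff_not_or, Set.ofPred_or]
    exact (isOpen_ne_fun hre continuous_const).union (isOpen_lt continuous_const him)

lemma bS_cover {r : ℕ} (zz : Fin r → ℂ) (hz : Function.Injective (fun i => (zz i).re))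
    (z : NN zz) (h : z ∉ bS zz true) : z ∈ bS zz false := by
  simp only [bS, Set.mem_ofPred_eq, not_forall, not_lt] at h ⊢
  obtain ⟨i, h1, h2⟩ := h
  intro j hj
  have : i = j := hz (h1.symm.trans hj)
  subst this
  refine lt_of_le_of_ne h2 fun h3 => z.2 i (Complex.ext h1 h3)

lemma bS_ne {r : ℕ} (zz : Fin r → ℂ) (z : NN zz) (h : z ∈ bS zz true) (h' : z ∈ bS zz false)
    (i : Fin r) : z.1.re ≠ (zz i).re := fun hh => lt_asymm (h i hh) (h' i hh)

lemma JJ_loc {r : ℕ} (zz : Fin r → ℂ) (z : NN zz) (h : ∀ i, z.1.re ≠ (zz i).re) :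
    ∀ᶠ z' in 𝓝 z, JJ zz z'.1 = JJ zz z.1 := by
  have hre : Continuous (fun z : NN zz => z.1.re) := Complex.continuous_re.comp continuous_subtype_val
  have : ∀ i, ∀ᶠ z' in 𝓝 z, ((zz i).re < z'.1.re ↔ (zz i).re < z.1.re) := by
    intro i
    rcases lt_or_gt_of_ne (h i) with h1 | h1
    · filter_upwards [hre.continuousAt.eventually (gt_mem_nhds h1)] with z' h2
      exact ⟨fun h => absurd h h2.not_gt, fun h => absurd h h1.not_gt⟩
    · filter_upwards [hre.continuousAt.eventually (lt_mem_nhds h1)] with z' h2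
      exact ⟨fun _ => h1, fun _ => h2⟩
  filter_upwards [Filter.eventually_all.2 this] with z' h2
  unfold JJ
  congr 1
  ext i
  simp [h2 i]

open Classical in
def core {r : ℕ} (zz : Fin r → ℂ) (hz : Function.Injective (fun i => (zz i).re))
    (g : ℕ → (ℝ ≃o ℝ)) : FiberBundleCore Bool (NN zz) Rd where
  baseSet := bS zz
  isOpen_baseSet := bS_open zz
  indexAt := fun z => decide (z ∈ bS zz true)
  mem_baseSet_at := by
    intro z
    by_cases h : z ∈ bS zz true
    · simpa [h] using h
    · simpa [h] using bS_cover zz hz z h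
  coordChange := fun i j z t => match i, j with
    | true, true => t
    | false, false => t
    | false, true => g (JJ zz z.1) t
    | true, false => (g (JJ zz z.1)).symm t
  coordChange_self := by
    rintro (_ | _) z hz t <;> rfl
  continuousOn_coordChange := by
    have key : ∀ G : ℕ → Rd → Rd, ContinuousOn (fun p : NN zz × Rd => G (JJ zz p.1.1) p.2) 
        ((bS zz true ∩ bS zz false) ×ˢ Set.univ) := by
      rintro G ⟨z, t⟩ h
      apply ContinuousAt.continuousWithinAt
      have h1 := JJ_loc zz z (bS_ne zz z h.1.1 h.1.2)
      have h2 : ∀ᶠ t' in 𝓝 t, t' = t := by rw [nhds_discrete]; simp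
      refine (continuousAt_const (y := G (JJ zz z.1) t)).congr ?_
      rw [nhds_prod_eq]
      filter_upwards [h1.prod_mk h2] with p hp
      rw [hp.1, hp.2]
    rintro (_ | _) (_ | _)
    · exact continuous_snd.continuousOn
    · rw [Set.inter_comm]; exact key (fun j t => g j t)
    · exact key (fun j t => (g j).symm t)
    · exact continuous_snd.continuousOn
  coordChange_comp := by
    rintro (_ | _) (_ | _) (_ | _) z hz t
    · rfl
    · rfl
    · exact (g _).symm_apply_apply t
    · rfl
    · rfl
    · exact (g _).apply_symm_apply t
    · rfl
    · rfl

def theCov {r : ℕ} (zz : Fin r → ℂ) (hz : Function.Injective (fun i => (zz i).re))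
    (g : ℕ → (ℝ ≃o ℝ)) (hg : ∀ j t, g j (t + 1) = g j t + 1) : Cov (NN zz) := 
  mkCov (core zz hz g) (by
    rintro (_ | _) (_ | _) z - -
    · exact fun _ _ h => h
    · exact (g _).strictMono
    · exact (g _).symm.strictMono
    · exact fun _ _ h => h) (by
    rintro (_ | _) (_ | _) z t - -
    · rfl
    · exact hg _ t
    · show (g _).symm (t + 1) = (g _).symm t + 1
      rw [OrderIso.symm_apply_eq, hg, OrderIso.apply_symm_apply]
    · rfl)

end SF

namespace SF

/-- The function `exp (2 π i y)`. -/
def ex (y : ℂ) : ℂ := Complex.exp (2 * Real.pi * Complex.I * y)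

lemma ex_cont : Continuous ex := by unfold ex; fun_prop
lemma ex_ne (y : ℂ) : ex y ≠ 0 := Complex.exp_ne_zero _
lemma ex_add (x y : ℂ) : ex (x + y) = ex x * ex y := by
  unfold ex; rw [mul_add, Complex.exp_add]
lemma ex_sub (x y : ℂ) : ex (x - y) = ex x / ex y := by
  unfold ex; rw [mul_sub, Complex.exp_sub]
lemma ex_zero : ex 0 = 1 := by simp [ex]
lemma ex_eq_iff (x y : ℂ) : ex x = ex y ↔ ∃ n : ℤ, x = y + n := by
  unfold ex
  rw [Complex.exp_eq_exp_iff_exists_int]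
  have h : (2 * (Real.pi : ℂ) * Complex.I) ≠ 0 := Complex.two_pi_I_ne_zero
  refine exists_congr fun n => ?_
  constructor
  · intro hh
    apply mul_left_cancel₀ h
    rw [hh]; ring
  · rintro rfl; ring
lemma ex_int (n : ℤ) : ex n = 1 := by
  rw [← ex_zero, ex_eq_iff]; exact ⟨n, by simp⟩
lemma ex_one : ex 1 = 1 := by simpa using ex_int 1
lemma norm_ex (y : ℂ) : ‖ex y‖ = Real.exp (- (2 * Real.pi * y.im)) := by
  unfold ex; rw [Complex.norm_exp]; congr 1; simp
lemma ex_surj (z : ℂ) (hz : z ≠ 0) : ∃ y, ex y = z := by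
  refine ⟨Complex.log z / (2 * Real.pi * Complex.I), ?_⟩
  unfold ex
  rw [mul_div_cancel₀ _ Complex.two_pi_I_ne_zero, Complex.exp_log hz]
lemma ex_real (s : ℝ) : ex s = ⟨Real.cos (2 * Real.pi * s), Real.sin (2 * Real.pi * s)⟩ := by
  unfold ex
  have : 2 * (Real.pi : ℂ) * Complex.I * s = ((2 * Real.pi * s : ℝ) : ℂ) * Complex.I := by
    push_cast; ring
  rw [this, Complex.exp_mul_I, ← Complex.ofReal_cos, ← Complex.ofReal_sin]
  generalize 2 * Real.pi * s = t
  apply Complex.ext <;> simp [-Complex.ofReal_cos, -Complex.ofReal_sin]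

lemma JJ_left {r : ℕ} (zz : Fin r → ℂ) (i : Fin r) (ε : ℝ)
    (hε : ∀ j, j ≠ i → ε ≤ |(zz j).re - (zz i).re|) (z : ℂ) (h : dist z (zz i) < ε)
    (hl : z.re < (zz i).re) : JJ zz z = JJ zz (zz i) := by
  have h1 : |z.re - (zz i).re| < ε := by
    rw [dist_eq_norm] at h
    exact lt_of_le_of_lt (Complex.abs_re_le_norm (z - zz i)) h
  unfold JJ
  congr 1
  ext j
  simp only [Finset.mem_filter, Finset.mem_univ, true_and]
  refine ⟨fun h => h.trans hl, fun h2 => ?_⟩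
  have hj : j ≠ i := by rintro rfl; exact lt_irrefl _ h2
  have := hε j hj
  rw [abs_lt] at h1
  rw [abs_of_neg (by linarith)] at this
  linarith

lemma JJ_right {r : ℕ} (zz : Fin r → ℂ) (i : Fin r) (ε : ℝ)
    (hε : ∀ j, j ≠ i → ε ≤ |(zz j).re - (zz i).re|) (z : ℂ) (h : dist z (zz i) < ε)
    (hl : (zz i).re < z.re) : JJ zz z = JJ zz (zz i) + 1 := by
  have h1 : |z.re - (zz i).re| < ε := by
    rw [dist_eq_norm] at h
    exact lt_of_le_of_lt (Complex.abs_re_le_norm (z - zz i)) h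
  unfold JJ
  rw [← Finset.card_insert_of_notMem (a := i) (by simp)]
  congr 1
  ext j
  simp only [Finset.mem_filter, Finset.mem_univ, true_and, Finset.mem_insert]
  constructor
  · intro h2
    by_cases hj : j = i
    · exact Or.inl hj
    right
    by_contra h3
    have := hε j hj
    rw [abs_lt] at h1
    rw [abs_of_nonneg (by linarith)] at this
    linarith
  · rintro (rfl | h)
    · exact hl
    · exact h.trans hl

section
variable {r : ℕ} (zz : Fin r → ℂ) (hz : Function.Injective (fun i => (zz i).re))
    (g : ℕ → (ℝ ≃o ℝ))

lemma exists_eps (i : Fin r) (hz : Function.Injective (fun i => (zz i).re)) : 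
    ∃ ε > 0, ∀ j, j ≠ i → ε ≤ |(zz j).re - (zz i).re| := by
  have h : ∀ j, ∃ ε > 0, j ≠ i → ε ≤ |(zz j).re - (zz i).re| := by
    intro j
    by_cases hj : j = i
    · exact ⟨1, one_pos, fun h => absurd hj h⟩
    · exact ⟨|(zz j).re - (zz i).re|, abs_pos.2 (sub_ne_zero.2 fun h => hj (hz h)), fun _ => le_rfl⟩
  choose f hf hf' using h
  refine ⟨Finset.univ.inf' ⟨i, Finset.mem_univ i⟩ f, ?_, fun j hj => 
    (Finset.inf'_le f (Finset.mem_univ j)).trans (hf' j hj)⟩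
  exact (Finset.lt_inf'_iff _).2 fun j _ => hf j

open Classical in
lemma local_section (hj : ∀ j, ∃ s, g j s = g (j + 1) s) (i : Fin r) : 
    ∃ ε > 0, ∃ sg : NN zz → (core zz hz g).TotalSpace,
    ContinuousOn sg {z | dist z.1 (zz i) < ε} ∧ ∀ z, (sg z).1 = z := by
  obtain ⟨ε, hε, hε'⟩ := exists_eps zz i hz
  obtain ⟨s, hs⟩ := hj (JJ zz (zz i))
  set Z := core zz hz g with hZ
  refine ⟨ε, hε, fun z => if z ∈ bS zz true then sc Z true (g (JJ zz (zz i)) s) z else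
    sc Z false s z, ?_, ?_⟩
  · intro z hzε
    apply ContinuousAt.continuousWithinAt
    have hV : IsOpen {z : NN zz | dist z.1 (zz i) < ε} :=
      isOpen_lt (by fun_prop) continuous_const
    by_cases hU : z ∈ bS zz true
    · refine ((sc_cont Z true (g (JJ zz (zz i)) s)).continuousAt
        ((Z.isOpen_baseSet true).mem_nhds hU)).congr ?_
      filter_upwards [(bS_open zz true).mem_nhds hU] with z' h'
      rw [if_pos h']
    · have hU' := bS_cover zz hz z hU
      refine ((sc_cont Z false s).continuousAt
        ((Z.isOpen_baseSet false).mem_nhds hU')).congr ?_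
      filter_upwards [(bS_open zz false).mem_nhds hU', hV.mem_nhds hzε] with z' h' hb
      split_ifs with hif
      · apply sc_eq Z h' hif
        show g (JJ zz z'.1) s = _
        rcases lt_or_gt_of_ne (bS_ne zz z' hif h' i) with h | h
        · rw [JJ_left zz i ε hε' _ hb h]
        · rw [JJ_right zz i ε hε' _ hb h, hs]
      · rfl
  · intro z
    dsimp only
    split_ifs <;> rfl

end

lemma mem_top {r : ℕ} (zz : Fin r → ℂ) (z : NN zz) (h : ∀ i, ‖zz i‖ < ‖z.1‖) (h0 : 0 ≤ z.1.im) : 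
    z ∈ bS zz true := by
  intro i hi
  by_contra h1
  push Not at h1
  have := h i
  rw [← sq_lt_sq₀ (norm_nonneg _) (norm_nonneg _), Complex.sq_norm, Complex.sq_norm,
    Complex.normSq_apply, Complex.normSq_apply, hi] at this
  nlinarith

lemma mem_bot {r : ℕ} (zz : Fin r → ℂ) (z : NN zz) (h : ∀ i, ‖zz i‖ < ‖z.1‖) (h0 : z.1.im ≤ 0) : 
    z ∈ bS zz false := by
  intro i hi
  by_contra h1
  push Not at h1
  have := h i
  rw [← sq_lt_sq₀ (norm_nonneg _) (norm_nonneg _), Complex.sq_norm, Complex.sq_norm,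
    Complex.normSq_apply, Complex.normSq_apply, hi] at this
  nlinarith

theorem exists_cov (r : ℕ) (hr : 1 ≤ r) (zz : Fin r → ℂ)
    (hz : Function.Injective (fun i => (zz i).re)) : ∃ C : Cov (NN zz),
    (∀ i, ∃ ε > 0, ∃ sg : NN zz → C.E, ContinuousOn sg {z | dist z.1 (zz i) < ε} ∧
      ∀ z, C.π (sg z) = z) ∧
    ∃ R : ℝ, ∃ hR : ∀ y : ℂ, y.im < -R → ∀ i, ex y ≠ zz i,
      ∃ sg : {y : ℂ // y.im < -R} → C.E, Continuous sg ∧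
      (∀ y, C.π (sg y) = ⟨ex y.1, hR y.1 y.2⟩) ∧
      ∀ (y : ℂ) (h : y.im < -R) (h' : (y + 1).im < -R), 
        sg ⟨y + 1, h'⟩ = C.sh ((r : ℤ) - 1) (sg ⟨y, h⟩) := by
  obtain ⟨g, g1, g0, gj, t0, ht0⟩ := exists_gs r hr
  set C := theCov zz hz g g1 with hC
  refine ⟨C, fun i => local_section zz hz g gj i, ?_⟩
  obtain ⟨R, hR1, hRb⟩ : ∃ R : ℝ, 1 ≤ R ∧ ∀ i, ‖zz i‖ ≤ R := by
    obtain ⟨M, hM⟩ := (Set.finite_range (fun i => ‖zz i‖)).bddAbove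
    exact ⟨max M 1, le_max_right _ _, fun i => (hM ⟨i, rfl⟩).trans (le_max_left _ _)⟩
  have hnorm : ∀ y : ℂ, y.im < -R → ∀ i, ‖zz i‖ < ‖ex y‖ := by
    intro y hy i
    refine (hRb i).trans_lt ?_
    rw [norm_ex]
    have h1 := Real.add_one_le_exp (-(2 * Real.pi * y.im))
    have h2 := Real.pi_gt_three
    nlinarith
  have hR : ∀ y : ℂ, y.im < -R → ∀ i, ex y ≠ zz i := by
    intro y hy i h
    have := hnorm y hy i
    rw [h] at this
    exact lt_irrefl _ this
  refine ⟨R, hR, ?_⟩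
  set A := {y : ℂ // y.im < -R}
  have hconv : Convex ℝ {y : ℂ | y.im < -R} := convex_halfSpace_im_lt _
  have : PreconnectedSpace A := isPreconnected_iff_preconnectedSpace.1 hconv.isPreconnected
  set y0 : ℂ := ⟨0, -R - 1⟩ with hy0
  have hy0m : ∀ s : ℝ, (y0 + s).im < -R := by intro s; simp [hy0]
  let q : A → NN zz := fun y => ⟨ex y.1, hR y.1 y.2⟩
  have hq : Continuous q := Continuous.subtype_mk (ex_cont.comp continuous_subtype_val) _
  let seg : I × A → A := fun p => ⟨((1 - p.1.1 : ℝ) : ℂ) * y0 + ((p.1.1 : ℝ) : ℂ) * p.2.1, by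
    have h1 := p.1.2.1
    have h2 := p.1.2.2
    have h3 := p.2.2
    simp [hy0] at h1 h2 h3 ⊢
    nlinarith [mul_nonneg h1 (sub_nonneg.2 h3.le)]⟩
  have hseg : Continuous seg := by
    apply Continuous.subtype_mk
    have : Continuous (fun p : I × A => p.2.1) := continuous_subtype_val.comp continuous_snd
    have h1 : Continuous (fun p : I × A => ((1 - p.1.1 : ℝ) : ℂ)) := by fun_prop
    have h2 : Continuous (fun p : I × A => ((p.1.1 : ℝ) : ℂ)) := by fun_prop
    exact (h1.mul continuous_const).add (h2.mul this)
  let y0' : A := ⟨y0, by simpa using hy0m 0⟩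
  set Z := core zz hz g with hZ
  let e0 : C.E := sc Z true t0 (q y0')
  let H : C(I × A, NN zz) := ⟨fun p => q (seg p), hq.comp hseg⟩
  have H0 : ∀ a, H (0, a) = C.π (ContinuousMap.const A e0 a) := by
    intro a
    show q (seg (0, a)) = q y0'
    congr 1
    apply Subtype.ext
    simp [seg, y0']
  let L := C.cov.liftHomotopy H (ContinuousMap.const A e0) H0
  have hL : ∀ p, C.π (L p) = H p := fun p => 
    congrFun (C.cov.liftHomotopy_lifts H (ContinuousMap.const A e0) H0) p
  let sg : A → C.E := fun y => L (1, y)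
  have hsg : Continuous sg := L.continuous.comp (by fun_prop)
  have hπ : ∀ y, C.π (sg y) = q y := by
    intro y
    rw [hL]
    show q (seg (1, y)) = q y
    congr 1
    apply Subtype.ext
    simp [seg]
  refine ⟨sg, hsg, hπ, ?_⟩
  have hsg0 : sg y0' = e0 := by
    have h1 : sg y0' = L (0, y0') := by
      refine C.cov.const_of_comp (g := fun s : I => L (s, y0')) (L.continuous.comp (by fun_prop))
        ?_ 1 0
      intro a a'
      rw [hL, hL]
      show q (seg (a, y0')) = q (seg (a', y0'))
      congr 1
      apply Subtype.ext
      simp [seg, y0']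
      ring
    rw [h1]
    exact C.cov.liftHomotopy_zero H (ContinuousMap.const A e0) H0 y0'
  let τ : ℝ → A := fun s => ⟨y0 + s, hy0m s⟩
  have hτ : Continuous τ := by
    apply Continuous.subtype_mk
    fun_prop
  set T := Real.exp (2 * Real.pi * (R + 1)) with hT
  have hTpos : 0 < T := Real.exp_pos _
  have exy0 : ex y0 = T := by
    unfold ex
    rw [hT, Complex.ofReal_exp]
    congr 1
    apply Complex.ext <;> simp [hy0]
    ring
  have hqτ : ∀ s, (q (τ s)).1 = ⟨T * Real.cos (2 * Real.pi * s), T * Real.sin (2 * Real.pi * s)⟩ := by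
    intro s
    show ex (y0 + s) = _
    rw [ex_add, exy0, ex_real]
    apply Complex.ext <;> simp [-Complex.ofReal_mul]
  have hnb : ∀ s i, ‖zz i‖ < ‖(q (τ s)).1‖ := fun s i => hnorm _ (hy0m s) i
  have hup : ∀ s ∈ Set.Icc (0:ℝ) (1/2), q (τ s) ∈ bS zz true := by
    intro s hs
    apply mem_top zz _ (hnb s)
    rw [hqτ]
    apply mul_nonneg hTpos.le
    apply Real.sin_nonneg_of_nonneg_of_le_pi
    · have := Real.pi_pos; have := hs.1; positivity
    · have := Real.pi_pos; have := hs.2; nlinarith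
  have hdn : ∀ s ∈ Set.Icc (1/2:ℝ) 1, q (τ s) ∈ bS zz false := by
    intro s hs
    apply mem_bot zz _ (hnb s)
    rw [hqτ]
    apply mul_nonpos_of_nonneg_of_nonpos hTpos.le
    have : Real.sin (2 * Real.pi * s) = Real.sin (2 * Real.pi * s - 2 * Real.pi) := by
      rw [Real.sin_sub_two_pi]
    rw [this]
    apply Real.sin_nonpos_of_nonpos_of_neg_pi_le
    · have := Real.pi_pos; have := hs.2; nlinarith
    · have := Real.pi_pos; have := hs.1; nlinarith
  have hτ0 : τ 0 = y0' := by apply Subtype.ext; simp [τ, y0']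
  have E1 : Set.EqOn (fun s => sg (τ s)) (fun s => (sc Z true t0 (q (τ s)) : C.E)) (Set.Icc 0 (1/2)) := by
    refine C.cov.eqOn_of_comp_eqOn isPreconnected_Icc (hsg.comp hτ).continuousOn ?_ ?_ 
      (a := 0) (by constructor <;> norm_num) ?_
    · exact (sc_cont Z true t0).comp (hq.comp hτ).continuousOn hup
    · intro s hs
      exact hπ _
    · show sg (τ 0) = _
      rw [hτ0, hsg0]
  have J0 : JJ zz (q (τ (1/2))).1 = 0 := by
    unfold JJ
    rw [Finset.card_eq_zero, Finset.filter_eq_empty_iff]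
    intro i _
    have h1 := hnb (1/2) i
    rw [hqτ] at h1 ⊢
    have e1 : 2 * Real.pi * (1/2) = Real.pi := by ring
    rw [e1, Real.cos_pi, Real.sin_pi] at h1 ⊢
    have h2 : ‖(⟨T * -1, T * 0⟩ : ℂ)‖ = T := by
      have : (⟨T * -1, T * 0⟩ : ℂ) = ((-T : ℝ) : ℂ) := by apply Complex.ext <;> simp [-Complex.ofReal_mul]
      rw [this, Complex.norm_real, norm_neg, Real.norm_of_nonneg hTpos.le]
    rw [h2] at h1
    have := (abs_le.1 (Complex.abs_re_le_norm (zz i))).1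
    simp only [mul_neg, mul_one, not_lt]
    linarith
  have J1 : JJ zz (q (τ 1)).1 = r := by
    unfold JJ
    rw [Finset.filter_true_of_mem, Finset.card_univ, Fintype.card_fin]
    intro i _
    have h1 := hnb 1 i
    rw [hqτ] at h1 ⊢
    have e1 : 2 * Real.pi * 1 = 2 * Real.pi := by ring
    rw [e1, Real.cos_two_pi, Real.sin_two_pi] at h1 ⊢
    have h2 : ‖(⟨T * 1, T * 0⟩ : ℂ)‖ = T := by
      have : (⟨T * 1, T * 0⟩ : ℂ) = ((T : ℝ) : ℂ) := by apply Complex.ext <;> simp [-Complex.ofReal_mul]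
      rw [this, Complex.norm_real, Real.norm_of_nonneg hTpos.le]
    rw [h2] at h1
    have := (abs_le.1 (Complex.abs_re_le_norm (zz i))).2
    simp only [mul_one]
    linarith
  have E2 : Set.EqOn (fun s => sg (τ s)) (fun s => (sc Z false t0 (q (τ s)) : C.E)) (Set.Icc (1/2) 1) := by
    refine C.cov.eqOn_of_comp_eqOn isPreconnected_Icc (hsg.comp hτ).continuousOn ?_ ?_ 
      (a := 1/2) (by constructor <;> norm_num) ?_
    · exact (sc_cont Z false t0).comp (hq.comp hτ).continuousOn hdn
    · intro s hs
      exact hπ _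
    · refine (E1 (x := 1/2) (by constructor <;> norm_num)).trans ?_
      apply Eq.symm
      apply sc_eq Z (hdn _ (by constructor <;> norm_num)) (hup _ (by constructor <;> norm_num))
      show g (JJ zz (q (τ (1/2))).1) t0 = t0
      rw [J0, g0]
  have hq1 : q (τ 1) = q y0' := by
    apply Subtype.ext
    show ex (y0 + (1:ℝ)) = ex y0
    rw [ex_add]; simp [ex_one]
  have hfin : sg (τ 1) = C.sh ((r:ℤ) - 1) (sg y0') := by
    rw [hsg0]
    refine (E2 (x := 1) (by constructor <;> norm_num)).trans ?_
    have hU : q y0' ∈ bS zz true := by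
      rw [← hτ0]; exact hup 0 (by constructor <;> norm_num)
    have e1 : sc Z false t0 (q (τ 1)) = sc Z true (t0 + ((r:ℝ) - 1)) (q (τ 1)) := by
      apply sc_eq Z (hdn _ (by constructor <;> norm_num))
      · rw [hq1]; exact hU
      · show g (JJ zz (q (τ 1)).1) t0 = _
        rw [J1, ht0]
    refine e1.trans ?_
    rw [hq1]
    apply C.ext
    · rfl
    · rw [C.val_sh]
      show cc Z true (Z.indexAt (q y0')) (q y0') (t0 + ((r:ℝ) - 1)) = 
        cc Z true (Z.indexAt (q y0')) (q y0') t0 + _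
      rw [← cc_int Z _ hU (Z.mem_baseSet_at _)]
      · push_cast; rfl
      · rintro (_ | _) (_ | _) z t - -
        · rfl
        · exact g1 _ t
        · show (g _).symm (t + 1) = (g _).symm t + 1
          rw [OrderIso.symm_apply_eq, g1, OrderIso.apply_symm_apply]
        · rfl
  have ha1 : ∀ a : A, (a.1 + 1).im < -R := fun a => by simpa using a.2
  have hall := C.cov.eq_of_comp_eq (A := A) (g₁ := fun a => sg ⟨a.1 + 1, ha1 a⟩)
    (g₂ := fun a => C.sh ((r:ℤ) - 1) (sg a)) (hsg.comp (Continuous.subtype_mk (by fun_prop) _))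
    ((C.sh_cont _).comp hsg) (by
      funext a
      simp only [Function.comp, C.π_sh, hπ]
      apply Subtype.ext
      show ex (a.1 + 1) = ex a.1
      rw [ex_add, ex_one, mul_one]) y0' (by
      rw [← hfin]
      congr 1)
  intro y h h'
  exact congrFun hall ⟨y, h⟩

end SF

namespace SF

lemma cov_ex : IsCoveringMap (fun y : ℂ => (⟨ex y, ex_ne y⟩ : {z : ℂ // z ≠ 0})) := by
  have h := Complex.isCoveringMap_exp.comp_homeomorph
    (Homeomorph.mulLeft₀ (2 * (Real.pi : ℂ) * Complex.I) Complex.two_pi_I_ne_zero)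
  exact h

lemma contOn_sub {A N : Type} [TopologicalSpace A] [TopologicalSpace N] {p : N → Prop}
    {h : A → {z : N // p z}} {D : Set A} (hc : ContinuousOn (fun w => (h w).1) D) :
    ContinuousOn h D := by
  rw [continuousOn_iff_continuous_domRestrict] at hc ⊢
  exact continuous_induced_rng.2 hc

lemma lift_vert {E N : Type} [TopologicalSpace E] [TopologicalSpace N] {p : E → N}
    (cov : IsCoveringMap p) (D : Set (ℝ × ℝ))
    (hD : ∀ x y y', (x, y) ∈ D → y' ≤ y → (x, y') ∈ D) (h : ℝ × ℝ → N) (hc : ContinuousOn h D)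
    (e0 : E) (h0 : ∀ x y, y ≤ 0 → h (x, y) = p e0) : 
    ∃ e : ℝ × ℝ → E, ContinuousOn e D ∧ ∀ w ∈ D, p (e w) = h w := by
  classical
  let τ : I × D → D := fun s => ⟨(s.2.1.1, s.2.1.2 - (1 - s.1.1) * (|s.2.1.2| + 1)), by
    apply hD s.2.1.1 s.2.1.2 _ s.2.2
    have h1 := s.1.2.2
    have := mul_nonneg (sub_nonneg.2 h1) (by positivity : 0 ≤ |s.2.1.2| + 1)
    linarith⟩
  have hτ : Continuous τ := by
    apply Continuous.subtype_mk
    fun_prop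
  let H : C(I × D, N) := ⟨fun s => D.domRestrict h (τ s), (continuousOn_iff_continuous_domRestrict.1 hc).comp hτ⟩
  have H0 : ∀ a, H (0, a) = p (ContinuousMap.const D e0 a) := by
    intro a
    show h (a.1.1, a.1.2 - (1 - (0:ℝ)) * (|a.1.2| + 1)) = p e0
    apply h0
    have := le_abs_self a.1.2
    linarith
  let L := cov.liftHomotopy H (ContinuousMap.const D e0) H0
  have hL : ∀ s, p (L s) = H s := fun s => 
    congrFun (cov.liftHomotopy_lifts H (ContinuousMap.const D e0) H0) s
  refine ⟨fun w => if hw : w ∈ D then L (1, ⟨w, hw⟩) else e0, ?_, ?_⟩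
  · rw [continuousOn_iff_continuous_domRestrict]
    have : D.domRestrict (fun w => if hw : w ∈ D then L (1, ⟨w, hw⟩) else e0) = fun w => L (1, w) := by
      funext w
      simp [Set.domRestrict]
    rw [this]
    exact L.continuous.comp (by fun_prop)
  · intro w hw
    simp only [hw, dif_pos, hL]
    show h (w.1, w.2 - (1 - (1:ℝ)) * (|w.2| + 1)) = h w
    simp

lemma lift_rect {E N : Type} [TopologicalSpace E] [TopologicalSpace N] {p : E → N}
    (cov : IsCoveringMap p) {x1 x2 y1 y2 : ℝ} (hx : x1 < x2) (hy : y1 ≤ y2) (h : ℝ × ℝ → N)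
    (hc : ContinuousOn h (Set.Icc x1 x2 ×ˢ Set.Icc y1 y2))
    (e1 : ℝ → E) (he1 : ContinuousOn e1 (Set.Icc y1 y2))
    (h0 : ∀ y ∈ Set.Icc y1 y2, p (e1 y) = h (x1, y)) : 
    ∃ e : ℝ × ℝ → E, ContinuousOn e (Set.Icc x1 x2 ×ˢ Set.Icc y1 y2) ∧
      (∀ w ∈ Set.Icc x1 x2 ×ˢ Set.Icc y1 y2, p (e w) = h w) ∧
      ∀ y ∈ Set.Icc y1 y2, e (x1, y) = e1 y := by
  set D : Set (ℝ × ℝ) := Set.Icc x1 x2 ×ˢ Set.Icc y1 y2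
  let τ : I × Set.Icc y1 y2 → D := fun s => ⟨(x1 + s.1.1 * (x2 - x1), s.2.1), by
    have h1 := s.1.2.1
    have h2 := s.1.2.2
    refine ⟨⟨?_, ?_⟩, s.2.2⟩ <;> dsimp only <;> nlinarith⟩
  have hτ : Continuous τ := by
    apply Continuous.subtype_mk
    fun_prop
  let H : C(I × Set.Icc y1 y2, N) :=
    ⟨fun s => D.domRestrict h (τ s), (continuousOn_iff_continuous_domRestrict.1 hc).comp hτ⟩
  let f : C(Set.Icc y1 y2, E) := ⟨(Set.Icc y1 y2).domRestrict e1, continuousOn_iff_continuous_domRestrict.1 he1⟩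
  have H0 : ∀ a, H (0, a) = p (f a) := by
    intro a
    show h (x1 + (0:ℝ) * (x2 - x1), a.1) = p (e1 a)
    rw [h0 a.1 a.2]
    simp
  let L := cov.liftHomotopy H f H0
  have hL : ∀ s, p (L s) = H s := fun s => congrFun (cov.liftHomotopy_lifts H f H0) s
  have hx' : 0 < x2 - x1 := sub_pos.2 hx
  refine ⟨fun w => L (Set.projIcc 0 1 zero_le_one ((w.1 - x1) / (x2 - x1)), Set.projIcc y1 y2 hy w.2),
    ?_, ?_, ?_⟩
  · apply Continuous.continuousOn
    apply L.continuous.comp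
    apply Continuous.prodMk
    · exact continuous_projIcc.comp (by fun_prop)
    · exact continuous_projIcc.comp (by fun_prop)
  · rintro ⟨x, y⟩ ⟨hxx, hyy⟩
    rw [hL]
    show h _ = h _
    have e1 : Set.projIcc (0:ℝ) 1 zero_le_one ((x - x1) / (x2 - x1)) = ⟨(x - x1) / (x2 - x1), 
      div_nonneg (sub_nonneg.2 hxx.1) hx'.le, (div_le_one hx').2 (sub_le_sub_right hxx.2 _)⟩ :=
      Set.projIcc_of_mem _ _
    rw [e1, Set.projIcc_of_mem hy hyy]
    congr 1
    show (x1 + (x - x1) / (x2 - x1) * (x2 - x1), y) = (x, y)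
    rw [div_mul_cancel₀ _ hx'.ne']
    congr 1
    ring
  · intro y hyy
    simp only [sub_self, zero_div]
    rw [Set.projIcc_of_mem hy hyy, Set.projIcc_left]
    exact cov.liftHomotopy_zero H f H0 _

lemma liftb_vert (D : Set (ℝ × ℝ))
    (hD : ∀ x y y', (x, y) ∈ D → y' ≤ y → (x, y') ∈ D) (h : ℝ × ℝ → ℂ) (hc : ContinuousOn h D)
    (hne : ∀ w ∈ D, h w ≠ 0) (b0 : ℂ) (hb0 : b0 ≠ 0)
    (h0 : ∀ x y, y ≤ 0 → h (x, y) = b0) : 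
    ∃ e : ℝ × ℝ → ℂ, ContinuousOn e D ∧ ∀ w ∈ D, ex (e w) = h w := by
  classical
  obtain ⟨e0, he0⟩ := ex_surj b0 hb0
  let h' : ℝ × ℝ → {z : ℂ // z ≠ 0} := fun w => if hw : h w ≠ 0 then ⟨h w, hw⟩ else ⟨1, one_ne_zero⟩
  have h'v : ∀ w, h w ≠ 0 → (h' w).1 = h w := fun w hw => by simp [h', hw]
  have hc' : ContinuousOn h' D := by
    apply contOn_sub
    exact hc.congr fun w hw => h'v w (hne w hw)
  obtain ⟨e, he, he'⟩ := lift_vert cov_ex D hD h' hc' e0 (fun x y hy => Subtype.ext (by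
    rw [h'v _ (by rw [h0 x y hy]; exact hb0), h0 x y hy]; exact he0.symm))
  exact ⟨e, he, fun w hw => by rw [← h'v w (hne w hw), ← he' w hw]⟩

lemma liftb_rect {x1 x2 y1 y2 : ℝ} (hx : x1 < x2) (hy : y1 ≤ y2) (h : ℝ × ℝ → ℂ)
    (hc : ContinuousOn h (Set.Icc x1 x2 ×ˢ Set.Icc y1 y2))
    (hne : ∀ w ∈ Set.Icc x1 x2 ×ˢ Set.Icc y1 y2, h w ≠ 0)
    (e1 : ℝ → ℂ) (he1 : ContinuousOn e1 (Set.Icc y1 y2))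
    (h0 : ∀ y ∈ Set.Icc y1 y2, ex (e1 y) = h (x1, y)) : 
    ∃ e : ℝ × ℝ → ℂ, ContinuousOn e (Set.Icc x1 x2 ×ˢ Set.Icc y1 y2) ∧
      (∀ w ∈ Set.Icc x1 x2 ×ˢ Set.Icc y1 y2, ex (e w) = h w) ∧
      ∀ y ∈ Set.Icc y1 y2, e (x1, y) = e1 y := by
  classical
  let h' : ℝ × ℝ → {z : ℂ // z ≠ 0} := fun w => if hw : h w ≠ 0 then ⟨h w, hw⟩ else ⟨1, one_ne_zero⟩
  have h'v : ∀ w, h w ≠ 0 → (h' w).1 = h w := fun w hw => by simp [h', hw]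
  have hc' : ContinuousOn h' (Set.Icc x1 x2 ×ˢ Set.Icc y1 y2) := by
    apply contOn_sub
    exact hc.congr fun w hw => h'v w (hne w hw)
  obtain ⟨e, he, he', he2⟩ := lift_rect cov_ex hx hy h' hc' e1 he1 (fun y hy => Subtype.ext (by
    rw [h'v _ (hne _ ⟨⟨le_rfl, hx.le⟩, hy⟩)]; exact h0 y hy))
  exact ⟨e, he, fun w hw => by rw [← h'v w (hne w hw), ← he' w hw], he2⟩

lemma Cov.mono_on {N : Type} [TopologicalSpace N] (C : Cov N) {A : Type} [TopologicalSpace A]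
    {S : Set A} (hS : IsPreconnected S) {f f' : A → C.E} (hf : ContinuousOn f S)
    (hf' : ContinuousOn f' S) (hp : ∀ x ∈ S, C.π (f x) = C.π (f' x)) {x y : A} (hx : x ∈ S)
    (hy : y ∈ S) : C.val (f x) < C.val (f' x) ↔ C.val (f y) < C.val (f' y) := by
  have : PreconnectedSpace S := isPreconnected_iff_preconnectedSpace.1 hS
  have key := C.mono S (S.domRestrict f) (S.domRestrict f') (continuousOn_iff_continuous_domRestrict.1 hf)
    (continuousOn_iff_continuous_domRestrict.1 hf') (fun x => hp x.1 x.2)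
  exact ⟨key ⟨x, hx⟩ ⟨y, hy⟩, key ⟨y, hy⟩ ⟨x, hx⟩⟩

lemma Cov.mono_on_le {N : Type} [TopologicalSpace N] (C : Cov N) {A : Type} [TopologicalSpace A]
    {S : Set A} (hS : IsPreconnected S) {f f' : A → C.E} (hf : ContinuousOn f S)
    (hf' : ContinuousOn f' S) (hp : ∀ x ∈ S, C.π (f x) = C.π (f' x)) {x y : A} (hx : x ∈ S)
    (hy : y ∈ S) : C.val (f x) ≤ C.val (f' x) ↔ C.val (f y) ≤ C.val (f' y) := by
  rw [← not_lt, ← not_lt, C.mono_on hS hf' hf (fun x hx => (hp x hx).symm) hx hy]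

/-- Two logarithms of the same function differ by a constant integer. -/
lemma log_diff {A : Type} [TopologicalSpace A] {S : Set A} (hS : IsPreconnected S) {f f' : A → ℂ}
    (hf : ContinuousOn f S) (hf' : ContinuousOn f' S) (hp : ∀ x ∈ S, ex (f x) = ex (f' x))
    {x0 : A} (hx0 : x0 ∈ S) :
    ∃ n : ℤ, ∀ x ∈ S, f x = f' x + n := by
  obtain ⟨n, hn⟩ := (ex_eq_iff _ _).1 (hp x0 hx0)
  refine ⟨n, ?_⟩
  have := cov_ex.eqOn_of_comp_eqOn hS hf (g₂ := fun x => f' x + n) (hf'.add continuousOn_const) 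
    (fun x hx => Subtype.ext (by 
      show ex (f x) = ex (f' x + n)
      rw [hp x hx, ex_add, ex_int, mul_one])) hx0 hn
  exact this

lemma Cov.sh_add {N : Type} [TopologicalSpace N] (C : Cov N) (l l' : ℤ) (e : C.E) :
    C.sh l (C.sh l' e) = C.sh (l' + l) e := by
  apply C.ext
  · simp only [C.π_sh]
  · simp only [C.val_sh]; push_cast; ring

lemma Cov.sh_zero {N : Type} [TopologicalSpace N] (C : Cov N) (e : C.E) : C.sh 0 e = e := by
  apply C.ext
  · simp only [C.π_sh]
  · simp only [C.val_sh]; push_cast; ring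

end SF

namespace SF

lemma slit_preconnected (xs ys δ η : ℝ) (hδ : 0 < δ) (hη : 0 < η) : 
    IsPreconnected {w : ℝ × ℝ | |w.1 - xs| ≤ δ ∧ |w.2 - ys| ≤ η ∧ (w.1 = xs → w.2 < ys)} := by
  have hS : {w : ℝ × ℝ | |w.1 - xs| ≤ δ ∧ |w.2 - ys| ≤ η ∧ (w.1 = xs → w.2 < ys)} = 
      ((Set.Ico (xs - δ) xs ×ˢ Set.Icc (ys - η) (ys + η)) ∪ 
      (Set.Icc (xs - δ) (xs + δ) ×ˢ Set.Ico (ys - η) ys)) ∪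
      (Set.Ioc xs (xs + δ) ×ˢ Set.Icc (ys - η) (ys + η)) := by
    ext ⟨x, y⟩
    simp only [Set.mem_ofPred_eq, Set.mem_union, Set.mem_prod, Set.mem_Icc, Set.mem_Ico, Set.mem_Ioc,
      abs_le]
    constructor
    · rintro ⟨⟨h1, h2⟩, ⟨h3, h4⟩, h5⟩
      rcases lt_trichotomy x xs with h | h | h
      · left; left; refine ⟨⟨?_, ?_⟩, ?_, ?_⟩ <;> linarith
      · left; right; have := h5 h; refine ⟨⟨?_, ?_⟩, ?_, ?_⟩ <;> linarith
      · right; refine ⟨⟨?_, ?_⟩, ?_, ?_⟩ <;> linarith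
    · rintro ((⟨⟨h1, h2⟩, h3, h4⟩ | ⟨⟨h1, h2⟩, h3, h4⟩) | ⟨⟨h1, h2⟩, h3, h4⟩)
      · refine ⟨⟨?_, ?_⟩, ⟨?_, ?_⟩, fun h => ?_⟩ <;> linarith
      · refine ⟨⟨?_, ?_⟩, ⟨?_, ?_⟩, fun h => ?_⟩ <;> linarith
      · refine ⟨⟨?_, ?_⟩, ⟨?_, ?_⟩, fun h => ?_⟩ <;> linarith
  rw [hS]
  have h1 : IsPreconnected (Set.Ico (xs - δ) xs ×ˢ Set.Icc (ys - η) (ys + η)) :=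
    isPreconnected_Ico.prod isPreconnected_Icc
  have h2 : IsPreconnected (Set.Icc (xs - δ) (xs + δ) ×ˢ Set.Ico (ys - η) ys) :=
    isPreconnected_Icc.prod isPreconnected_Ico
  have h3 : IsPreconnected (Set.Ioc xs (xs + δ) ×ˢ Set.Icc (ys - η) (ys + η)) :=
    isPreconnected_Ioc.prod isPreconnected_Icc
  refine (h1.union (xs - δ, ys - η) ?_ ?_ h2).union (xs + δ, ys - η) ?_ ?_ h3
  · refine ⟨⟨?_, ?_⟩, ?_, ?_⟩ <;> dsimp only <;> linarith
  · refine ⟨⟨?_, ?_⟩, ?_, ?_⟩ <;> dsimp only <;> linarith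
  · right; refine ⟨⟨?_, ?_⟩, ?_, ?_⟩ <;> dsimp only <;> linarith
  · refine ⟨⟨?_, ?_⟩, ?_, ?_⟩ <;> dsimp only <;> linarith

lemma jump {N : Type} [TopologicalSpace N] (C : Cov N) (m : ℤ) (zf : ℝ × ℝ → N) (bf : ℝ × ℝ → ℂ)
    (θ : ℝ → ℝ) (b0 : ℂ) (n0 : N) (Q : Set (ℝ × ℝ)) (hzc : ContinuousOn zf Qᶜ)
    (hbc : Continuous bf) (hbne : ∀ w ∉ Q, bf w ≠ 0) (hθ : Continuous θ)
    (htz : ∀ x, zf (x, 1) = n0) (htb : ∀ x, bf (x, 1) = ex (θ x) * b0)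
    (D : Set (ℝ × ℝ)) (hDQ : D ⊆ Qᶜ) (e : ℝ × ℝ → C.E) (he : ContinuousOn e D)
    (heπ : ∀ w ∈ D, C.π (e w) = zf w) (β : ℝ × ℝ → ℂ) (hβ : ContinuousOn β D)
    (hβe : ∀ w ∈ D, ex (β w) = bf w) (xs ys δ η : ℝ) (hδ : 0 < δ) (hη : 0 < η) (hy1 : ys + η ≤ 1)
    (hD1 : ∀ x y, |x - xs| ≤ δ → (x = xs → y < ys) → (x, y) ∈ D)
    (hQ1 : ∀ x y, |x - xs| ≤ δ → ys < y → (x, y) ∉ Q)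
    (κ : ℝ × ℝ → ℂ → C.E) (S : Set ((ℝ × ℝ) × ℂ))
    (hS : S = {p | p.1 ≠ (xs, ys) ∧ |p.1.1 - xs| ≤ δ ∧ |p.1.2 - ys| ≤ η ∧ ex p.2 = bf p.1})
    (hκ : ContinuousOn (fun p : (ℝ × ℝ) × ℂ => κ p.1 p.2) S)
    (hκπ : ∀ p ∈ S, C.π (κ p.1 p.2) = zf p.1)
    (hκs : ∀ w β (n : ℤ), (w, β) ∈ S → κ w (β + n) = C.sh (-m * n) (κ w β)) : 
    |(C.val (e (xs + δ, 1)) + m * (β (xs + δ, 1) - θ (xs + δ)).re) - 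
      (C.val (e (xs - δ, 1)) + m * (β (xs - δ, 1) - θ (xs - δ)).re)| < 1 := by
  -- lower part
  set S1 := {w : ℝ × ℝ | |w.1 - xs| ≤ δ ∧ |w.2 - ys| ≤ η ∧ (w.1 = xs → w.2 < ys)} with hS1
  have S1pre := slit_preconnected xs ys δ η hδ hη
  have S1D : S1 ⊆ D := fun w hw => hD1 w.1 w.2 hw.1 hw.2.2
  have S1S : ∀ w ∈ S1, (w, β w) ∈ S := by
    intro w hw
    rw [hS]
    refine ⟨?_, hw.1, hw.2.1, hβe w (S1D hw)⟩
    rintro rfl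
    exact lt_irrefl _ (hw.2.2 rfl)
  have hk1 : ContinuousOn (fun w => κ w (β w)) S1 := 
    hκ.comp (continuousOn_id.prodMk (hβ.mono S1D)) S1S
  set pl : ℝ × ℝ := (xs - δ, ys + η) with hpl
  set pr : ℝ × ℝ := (xs + δ, ys + η) with hpr
  have hplS : pl ∈ S1 := by
    refine ⟨?_, ?_, ?_⟩ 
    · simp [hpl, abs_of_pos hδ]
    · simp [hpl, abs_of_pos hη]
    · intro h; simp [hpl] at h; linarith
  have hprS : pr ∈ S1 := by
    refine ⟨?_, ?_, ?_⟩ 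
    · simp [hpr, abs_of_pos hδ]
    · simp [hpr, abs_of_pos hη]
    · intro h; simp [hpr] at h; linarith
  set l : ℤ := ⌊C.val (e pl) - C.val (κ pl (β pl))⌋ with hl
  have hl1 : C.val (κ pl (β pl)) + l ≤ C.val (e pl) := by
    have := Int.floor_le (C.val (e pl) - C.val (κ pl (β pl)))
    linarith
  have hl2 : C.val (e pl) < C.val (κ pl (β pl)) + l + 1 := by
    have := Int.lt_floor_add_one (C.val (e pl) - C.val (κ pl (β pl)))
    linarith
  have hr1 : C.val (κ pr (β pr)) + l ≤ C.val (e pr) := by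
    have := (C.mono_on_le S1pre (f := fun w => C.sh l (κ w (β w))) (f' := e) 
      ((C.sh_cont l).comp_continuousOn hk1) (he.mono S1D) (fun w hw => by
        rw [C.π_sh, hκπ _ (S1S w hw), heπ w (S1D hw)]) hplS hprS).1
    simp only [C.val_sh] at this
    exact this hl1
  have hr2 : C.val (e pr) < C.val (κ pr (β pr)) + l + 1 := by
    have := (C.mono_on S1pre (f' := fun w => C.sh (l + 1) (κ w (β w))) (f := e) 
      (he.mono S1D) ((C.sh_cont _).comp_continuousOn hk1) (fun w hw => by
        rw [C.π_sh, hκπ _ (S1S w hw), heπ w (S1D hw)]) hplS hprS).1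
    simp only [C.val_sh] at this
    push_cast at this
    rw [← add_assoc, ← add_assoc] at this
    exact this hl2
  -- upper part
  set R := Set.Icc (xs - δ) (xs + δ) ×ˢ Set.Icc (ys + η) 1 with hR
  have hRabs : ∀ w ∈ R, |w.1 - xs| ≤ δ := fun w hw => abs_le.2 ⟨by linarith [hw.1.1], by linarith [hw.1.2]⟩
  have hRQ : R ⊆ Qᶜ := fun w hw => hQ1 w.1 w.2 (hRabs w hw) (by linarith [hw.2.1])
  have hleft : ∀ y, (xs - δ, y) ∈ D := fun y => hD1 _ _ (by simp [abs_of_pos hδ]) (fun h => by linarith)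
  have hright : ∀ y, (xs + δ, y) ∈ D := fun y => hD1 _ _ (by simp [abs_of_pos hδ]) (fun h => by linarith)
  have hxx : xs - δ < xs + δ := by linarith
  obtain ⟨L, hLc, hLπ, hL0⟩ := lift_rect C.cov hxx hy1 zf (hzc.mono hRQ)
    (fun y => e (xs - δ, y)) (he.comp (by fun_prop) (fun y _ => hleft y)) (fun y _ => heπ _ (hleft y))
  obtain ⟨M, hMc, hMπ, hM0⟩ := liftb_rect hxx hy1 bf hbc.continuousOn (fun w hw => hbne w (hRQ hw))
    (fun y => β (xs - δ, y)) (hβ.comp (by fun_prop) (fun y _ => hleft y)) (fun y _ => hβe _ (hleft y))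
  have hlx : xs - δ ∈ Set.Icc (xs - δ) (xs + δ) := ⟨le_rfl, hxx.le⟩
  have hrx : xs + δ ∈ Set.Icc (xs - δ) (xs + δ) := ⟨hxx.le, le_rfl⟩
  have hby : ys + η ∈ Set.Icc (ys + η) 1 := ⟨le_rfl, hy1⟩
  have hty : (1:ℝ) ∈ Set.Icc (ys + η) 1 := ⟨hy1, le_rfl⟩
  have hLl : L pl = e pl := hL0 _ hby
  have hMl : M pl = β pl := hM0 _ hby
  have hLt : L (xs - δ, 1) = e (xs - δ, 1) := hL0 _ hty
  have hMt : M (xs - δ, 1) = β (xs - δ, 1) := hM0 _ hty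
  -- bottom edge
  set T := Set.Icc (xs - δ) (xs + δ) ×ˢ ({ys + η} : Set ℝ) with hT
  have Tpre : IsPreconnected T := isPreconnected_Icc.prod isPreconnected_singleton
  have TR : T ⊆ R := Set.prod_mono le_rfl (by simpa using hy1)
  have TS : ∀ w ∈ T, (w, M w) ∈ S := by
    intro w hw
    have hw2 : w.2 = ys + η := hw.2
    rw [hS]
    refine ⟨?_, hRabs w (TR hw), ?_, hMπ w (TR hw)⟩
    · rintro rfl; dsimp only at hw2; linarith
    · simp [hw2, abs_of_pos hη]
  have hplT : pl ∈ T := ⟨hlx, rfl⟩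
  have hprT : pr ∈ T := ⟨hrx, rfl⟩
  have hk2 : ContinuousOn (fun w => κ w (M w)) T := 
    hκ.comp (continuousOn_id.prodMk (hMc.mono TR)) TS
  have hs1 : C.val (κ pr (M pr)) + l ≤ C.val (L pr) := by
    have := (C.mono_on_le Tpre (f := fun w => C.sh l (κ w (M w))) (f' := L) 
      ((C.sh_cont l).comp_continuousOn hk2) (hLc.mono TR) (fun w hw => by
        rw [C.π_sh, hκπ _ (TS w hw), hLπ w (TR hw)]) hplT hprT).1
    simp only [C.val_sh] at this
    exact this (by rw [hMl, hLl]; exact hl1)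
  have hs2 : C.val (L pr) < C.val (κ pr (M pr)) + l + 1 := by
    have := (C.mono_on Tpre (f' := fun w => C.sh (l + 1) (κ w (M w))) (f := L) 
      (hLc.mono TR) ((C.sh_cont _).comp_continuousOn hk2) (fun w hw => by
        rw [C.π_sh, hκπ _ (TS w hw), hLπ w (TR hw)]) hplT hprT).1
    simp only [C.val_sh] at this
    push_cast at this
    rw [← add_assoc, ← add_assoc] at this
    exact this (by rw [hMl, hLl]; exact hl2)
  -- right edge
  set V := ({xs + δ} : Set ℝ) ×ˢ Set.Icc (ys + η) 1 with hV
  have Vpre : IsPreconnected V := isPreconnected_singleton.prod isPreconnected_Icc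
  have VR : V ⊆ R := Set.prod_mono (by simpa using hxx.le) le_rfl
  have VD : V ⊆ D := by
    rintro ⟨x, y⟩ ⟨hx, -⟩
    have : x = xs + δ := hx
    subst this
    exact hright y
  have hprV : pr ∈ V := ⟨rfl, hby⟩
  have htV : (xs + δ, (1:ℝ)) ∈ V := ⟨rfl, hty⟩
  obtain ⟨n, hn⟩ := log_diff Vpre (hβ.mono VD) (hMc.mono VR) (fun w hw => by
    rw [hβe w (VD hw), hMπ w (VR hw)]) hprV
  have hκn : C.val (κ pr (β pr)) = C.val (κ pr (M pr)) - m * n := by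
    rw [hn pr hprV, hκs _ _ _ (TS pr hprT), C.val_sh]; push_cast; ring
  rw [hκn] at hr1 hr2
  have hπV : ∀ (j : ℤ) w, w ∈ V → C.π (C.sh j (e w)) = C.π (L w) := fun j w hw => by
    rw [C.π_sh, heπ w (VD hw), hLπ w (VR hw)]
  have u1 : C.val (e (xs + δ, 1)) + m * n - 1 < C.val (L (xs + δ, 1)) := by
    have := (C.mono_on Vpre (f := fun w => C.sh (m * n - 1) (e w)) (f' := L) 
      ((C.sh_cont _).comp_continuousOn (he.mono VD)) (hLc.mono VR) (hπV _) hprV htV).1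
    simp only [C.val_sh] at this
    push_cast at this
    have := this (by linarith)
    linarith
  have u2 : C.val (L (xs + δ, 1)) < C.val (e (xs + δ, 1)) + m * n + 1 := by
    have := (C.mono_on Vpre (f' := fun w => C.sh (m * n + 1) (e w)) (f := L) 
      (hLc.mono VR) ((C.sh_cont _).comp_continuousOn (he.mono VD)) 
      (fun w hw => (hπV _ w hw).symm) hprV htV).1
    simp only [C.val_sh] at this
    push_cast at this
    have := this (by linarith)
    linarith
  -- top edge
  set W := Set.Icc (xs - δ) (xs + δ) ×ˢ ({1} : Set ℝ) with hW
  have Wpre : IsPreconnected W := isPreconnected_Icc.prod isPreconnected_singleton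
  have WR : W ⊆ R := Set.prod_mono le_rfl (by simpa using hy1)
  have Wz : ∀ w ∈ W, zf w = n0 := by
    rintro ⟨x, y⟩ ⟨-, hy⟩
    have : y = 1 := hy
    subst this
    exact htz x
  have hLL : L (xs + δ, 1) = L (xs - δ, 1) := 
    C.cov.constOn_of_comp Wpre (hLc.mono WR) (fun w hw w' hw' => by
      rw [hLπ _ (WR hw), hLπ _ (WR hw'), Wz w hw, Wz w' hw']) ⟨hrx, rfl⟩ ⟨hlx, rfl⟩
  obtain ⟨c0, hc0⟩ := ex_surj b0 (by
    intro h
    have := hbne (xs + δ, 1) (hRQ ⟨hrx, hty⟩)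
    rw [htb, h, mul_zero] at this
    exact this rfl)
  obtain ⟨n', hn'⟩ := log_diff Wpre (hMc.mono WR) (f' := fun w => (θ w.1 : ℂ) + c0) (by fun_prop) 
    (fun w hw => by
      have : w = (w.1, 1) := Prod.ext rfl hw.2
      rw [hMπ w (WR hw), ex_add, hc0, ← htb, ← this]) (x0 := (xs + δ, 1)) ⟨hrx, rfl⟩
  have hM1 := hn' (xs + δ, 1) ⟨hrx, rfl⟩
  have hM2 := hn' (xs - δ, 1) ⟨hlx, rfl⟩
  rw [hn _ htV, hM1, ← hMt, hM2]
  rw [hLL, hLt] at u1 u2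
  rw [abs_lt]
  simp
  constructor <;> nlinarith

end SF

namespace SF

lemma exists_local_log (bf : ℝ × ℝ → ℂ) (hb : Continuous bf) (q : ℝ × ℝ) (hq : bf q ≠ 0) :
    ∃ lam : ℝ × ℝ → ℂ, ∀ᶠ w in 𝓝 q, ContinuousAt lam w ∧ ex (lam w) = bf w := by
  obtain ⟨lq, hlq⟩ := ex_surj _ hq
  refine ⟨fun w => lq + Complex.log (bf w / bf q) / (2 * Real.pi * Complex.I), ?_⟩
  have hc : ContinuousAt (fun w => bf w / bf q) q := by fun_prop (disch := assumption)
  have h1 : ∀ᶠ w in 𝓝 q, bf w / bf q ∈ Complex.slitPlane := by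
    apply hc.eventually_mem
    apply Complex.isOpen_slitPlane.mem_nhds
    simp [hq, Complex.one_mem_slitPlane]
  have h2 : ∀ᶠ w in 𝓝 q, bf w ≠ 0 := hb.continuousAt.eventually_ne hq
  filter_upwards [h1, h2] with w hw hw2
  constructor
  · apply ContinuousAt.add continuousAt_const
    apply ContinuousAt.div_const
    exact ContinuousAt.clog (f := fun x => bf x / bf q) (by fun_prop (disch := assumption)) hw
  · rw [ex_add, hlq]
    have : ex (Complex.log (bf w / bf q) / (2 * Real.pi * Complex.I)) = bf w / bf q := by
      unfold ex
      rw [mul_div_cancel₀ _ Complex.two_pi_I_ne_zero, Complex.exp_log (div_ne_zero hw2 hq)]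
    rw [this, mul_div_cancel₀ _ hq]

def HasKappa {N : Type} [TopologicalSpace N] (C : Cov N) (m : ℤ) (zf : ℝ × ℝ → N)
    (bf : ℝ × ℝ → ℂ) (q : ℝ × ℝ) : Prop :=
  ∃ δ0 > 0, ∃ κ : ℝ × ℝ → ℂ → C.E, 
    ContinuousOn (fun p : (ℝ × ℝ) × ℂ => κ p.1 p.2) {p | p.1 ≠ q ∧ dist p.1 q < δ0 ∧ ex p.2 = bf p.1} ∧
    (∀ p ∈ {p : (ℝ × ℝ) × ℂ | p.1 ≠ q ∧ dist p.1 q < δ0 ∧ ex p.2 = bf p.1}, C.π (κ p.1 p.2) = zf p.1) ∧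
    (∀ w β (n : ℤ), (w, β) ∈ {p : (ℝ × ℝ) × ℂ | p.1 ≠ q ∧ dist p.1 q < δ0 ∧ ex p.2 = bf p.1} →
      κ w (β + n) = C.sh (-m * n) (κ w β))

lemma round_contOn {A : Type} [TopologicalSpace A] {S : Set A} {g : A → ℝ} (hg : ContinuousOn g S)
    (h : ∀ x ∈ S, ∃ n : ℤ, g x = n) : ContinuousOn (fun x => round (g x)) S := by
  rw [Int.isClosedEmbedding_coe_real.isInducing.continuousOn_iff]
  refine hg.congr fun x hx => ?_
  obtain ⟨n, hn⟩ := h x hx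
  simp [hn]

lemma Cov.sh_contOn {N : Type} [TopologicalSpace N] (C : Cov N) {A : Type} [TopologicalSpace A]
    {S : Set A} {n : A → ℤ} {e : A → C.E} (hn : ContinuousOn n S) (he : ContinuousOn e S) :
    ContinuousOn (fun x => C.sh (n x) (e x)) S := by
  have h : Continuous (fun p : ℤ × C.E => C.sh p.1 p.2) := by
    rw [continuous_prod_of_discrete_left]
    exact fun l => C.sh_cont l
  exact h.comp_continuousOn (hn.prodMk he)

lemma kappa_fin {N : Type} [TopologicalSpace N] (C : Cov N) (m : ℤ) (zf : ℝ × ℝ → N)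
    (bf : ℝ × ℝ → ℂ) (hb : Continuous bf) (q : ℝ × ℝ) (hq : bf q ≠ 0) 
    (W : Set N) (sg : N → C.E) (hsg : ContinuousOn sg W) (hsgπ : ∀ z, C.π (sg z) = z)
    (hW : ∀ᶠ w in 𝓝[≠] q, ContinuousAt zf w ∧ zf w ∈ W) : HasKappa C m zf bf q := by
  obtain ⟨lam, hlam⟩ := exists_local_log bf hb q hq
  have hall := (eventually_nhdsWithin_iff.1 hW).and hlam
  obtain ⟨δ0, hδ0, hball⟩ := Metric.eventually_nhds_iff.1 hall
  have hintg : ∀ w β, dist w q < δ0 → ex β = bf w → ∃ n : ℤ, β = lam w + n := by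
    intro w β hw hβ
    apply (ex_eq_iff _ _).1
    rw [hβ, (hball hw).2.2]
  refine ⟨δ0, hδ0, fun w β => C.sh (-m * round (β - lam w).re) (sg (zf w)), ?_, ?_, ?_⟩
  · have hlc : ContinuousOn (fun p : (ℝ × ℝ) × ℂ => lam p.1)
        {p | p.1 ≠ q ∧ dist p.1 q < δ0 ∧ ex p.2 = bf p.1} := fun p hp =>
      (ContinuousAt.comp (f := fun p : (ℝ × ℝ) × ℂ => p.1) (hball hp.2.1).2.1
        continuousAt_fst).continuousWithinAt
    have hzc : ContinuousOn (fun p : (ℝ × ℝ) × ℂ => zf p.1)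
        {p | p.1 ≠ q ∧ dist p.1 q < δ0 ∧ ex p.2 = bf p.1} := fun p hp =>
      (ContinuousAt.comp (f := fun p : (ℝ × ℝ) × ℂ => p.1) ((hball hp.2.1).1 hp.1).1
        continuousAt_fst).continuousWithinAt
    apply C.sh_contOn
    · apply ContinuousOn.mul continuousOn_const
      apply round_contOn
      · exact Complex.continuous_re.comp_continuousOn (continuousOn_snd.sub hlc)
      · intro p hp
        obtain ⟨n, hn⟩ := hintg p.1 p.2 hp.2.1 hp.2.2
        exact ⟨n, by rw [hn]; simp⟩
    · exact hsg.comp hzc fun p hp => ((hball hp.2.1).1 hp.1).2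
  · intro p hp
    rw [C.π_sh, hsgπ]
  · intro w β n hp
    have : (β + n - lam w).re = (β - lam w).re + (n : ℤ) := by simp; ring
    simp only
    rw [this, round_add_intCast, C.sh_add]
    congr 1
    ring

lemma kappa_inf {r : ℕ} {zz : Fin r → ℂ} (C : Cov (NN zz)) (m : ℤ) (R : ℝ)
    (hR : ∀ y : ℂ, y.im < -R → ∀ i, ex y ≠ zz i) (sg : {y : ℂ // y.im < -R} → C.E) 
    (hsg : Continuous sg) (hsgπ : ∀ y, C.π (sg y) = ⟨ex y.1, hR y.1 y.2⟩)
    (hsgs : ∀ y h h', sg ⟨y+1,h'⟩ = C.sh m (sg ⟨y,h⟩))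
    (zf : ℝ × ℝ → NN zz)
    (af bf : ℝ × ℝ → ℂ) (ha : Continuous af) (hb : Continuous bf) (q : ℝ × ℝ) (hq : bf q = 0)
    (hqa : af q ≠ 0) (hz : ∀ᶠ w in 𝓝[≠] q, (zf w).1 = af w / bf w) : HasKappa C m zf bf q := by
  classical
  obtain ⟨alp, halp⟩ := exists_local_log af ha q hqa
  have hbig : ∀ᶠ w in 𝓝 q, ‖bf w‖ * Real.exp (2 * Real.pi * R) < ‖af w‖ := by
    have h1 : Continuous (fun w => ‖bf w‖ * Real.exp (2 * Real.pi * R)) := by fun_prop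
    have h2 : Continuous (fun w => ‖af w‖) := by fun_prop
    apply h1.continuousAt.eventually_lt h2.continuousAt
    simp [hq, hqa]
  have hall := ((eventually_nhdsWithin_iff.1 hz).and halp).and hbig
  obtain ⟨δ0, hδ0, hball⟩ := Metric.eventually_nhds_iff.1 hall
  have him : ∀ w β, dist w q < δ0 → ex β = bf w → (alp w - β).im < -R := by
    intro w β hw hβ
    have hn := norm_ex (alp w - β)
    rw [ex_sub, (hball hw).1.2.2, hβ, norm_div] at hn
    have hbw : bf w ≠ 0 := hβ ▸ ex_ne β
    have h3 := (hball hw).2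
    rw [mul_comm, ← lt_div_iff₀ (norm_pos_iff.2 hbw), hn, Real.exp_lt_exp] at h3
    have := Real.pi_pos
    by_contra hcon
    push Not at hcon
    nlinarith
  have hsgn : ∀ (n : ℕ) y h h', sg ⟨y + n, h'⟩ = C.sh (m * n) (sg ⟨y, h⟩) := by
    intro n
    induction n with
    | zero => 
      intro y h h'
      simp [C.sh_zero]
    | succ n ih =>
      intro y h h'
      have h2 : (y + (n : ℂ)).im < -R := by simpa using h
      have h3 : (y + (n : ℂ) + 1).im < -R := by simpa using h
      have := hsgs (y + n) h2 h3
      rw [ih y h h2, C.sh_add] at this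
      have e1 : y + ((n + 1 : ℕ) : ℂ) = y + n + 1 := by push_cast; ring
      have e2 : sg ⟨y + ((n + 1 : ℕ) : ℂ), h'⟩ = sg ⟨y + n + 1, h3⟩ := by congr 2
      rw [e2, this]
      congr 1
      push_cast; ring
  have hsgz : ∀ (n : ℤ) y h h', sg ⟨y + n, h'⟩ = C.sh (m * n) (sg ⟨y, h⟩) := by
    intro n y h h'
    rcases Int.eq_nat_or_neg n with ⟨k, rfl | rfl⟩
    · have h2 : (y + (k : ℂ)).im < -R := by simpa using h
      have := hsgn k y h h2
      simpa using this
    · have h2 : (y + ((-(k : ℤ) : ℤ) : ℂ) + (k : ℂ)).im < -R := by simpa using h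
      have := hsgn k _ h' h2
      have e2 : sg ⟨y + ((-(k : ℤ) : ℤ) : ℂ) + (k : ℂ), h2⟩ = sg ⟨y, h⟩ := by 
        congr 2
        push_cast; ring
      rw [← e2, this, C.sh_add]
      have : m * (k : ℤ) + m * (-(k : ℤ)) = 0 := by ring
      rw [this, C.sh_zero]
  have hne : Nonempty C.E := by
    refine ⟨sg ⟨(-(R + 1) : ℝ) * Complex.I, ?_⟩⟩
    simp
  obtain ⟨edef⟩ := hne
  refine ⟨δ0, hδ0, fun w β => if h : (alp w - β).im < -R then sg ⟨alp w - β, h⟩ else edef, ?_, ?_, ?_⟩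
  · have hlc : ContinuousOn (fun p : (ℝ × ℝ) × ℂ => alp p.1)
        {p | p.1 ≠ q ∧ dist p.1 q < δ0 ∧ ex p.2 = bf p.1} := fun p hp =>
      (ContinuousAt.comp (f := fun p : (ℝ × ℝ) × ℂ => p.1) (hball hp.2.1).1.2.1
        continuousAt_fst).continuousWithinAt
    have hsub := hlc.sub continuousOn_snd
    rw [continuousOn_iff_continuous_domRestrict] at hsub ⊢
    have h2 : Continuous (fun p : {p : (ℝ × ℝ) × ℂ | p.1 ≠ q ∧ dist p.1 q < δ0 ∧ ex p.2 = bf p.1} =>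
      (⟨alp p.1.1 - p.1.2, him _ _ p.2.2.1 p.2.2.2⟩ : {y : ℂ // y.im < -R})) := 
      Continuous.subtype_mk hsub _
    refine (hsg.comp h2).congr fun p => ?_
    simp only [Set.domRestrict_apply, Function.comp]
    rw [dif_pos (him _ _ p.2.2.1 p.2.2.2)]
  · intro p hp
    simp only
    rw [dif_pos (him _ _ hp.2.1 hp.2.2), hsgπ]
    apply Subtype.ext
    rw [(hball hp.2.1).1.1 hp.1]
    simp only
    rw [ex_sub, (hball hp.2.1).1.2.2, hp.2.2]
  · intro w β n hp
    have h1 := him w β hp.2.1 hp.2.2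
    have h2 : (alp w - (β + n)).im < -R := by simpa using h1
    simp only
    rw [dif_pos h1, dif_pos h2]
    have h3 : (alp w - β + ((-n : ℤ) : ℂ)).im < -R := by simpa using h1
    have e1 : sg ⟨alp w - (β + n), h2⟩ = sg ⟨alp w - β + ((-n : ℤ) : ℂ), h3⟩ := by
      congr 2
      push_cast; ring
    rw [e1, hsgz (-n) _ h1 h3]
    congr 1
    ring

end SF

namespace SF

lemma jump_count (f : ℝ → ℝ) (X : Finset ℝ)
    (h1 : ∀ u v, u ≤ v → (∀ x ∈ X, ¬ (u ≤ x ∧ x ≤ v)) → f u = f v)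
    (h2 : ∀ x ∈ X, ∃ δ1 > 0, ∀ δ, 0 < δ → δ < δ1 → |f (x + δ) - f (x - δ)| ≤ 1) :
    ∀ (n : ℕ) (u v : ℝ), u ≤ v → u ∉ X → v ∉ X → (X.filter (fun x => u < x ∧ x < v)).card ≤ n →
      |f v - f u| ≤ n := by
  intro n
  induction n using Nat.strong_induction_on with
  | _ n ih =>
  intro u v huv hu hv hn
  rcases (X.filter (fun x => u < x ∧ x < v)).eq_empty_or_nonempty with hE | ⟨x, hx⟩
  · rw [h1 u v huv]
    · simp
    · intro x hx ⟨h3, h4⟩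
      have h5 : x ≠ u := fun h => hu (h ▸ hx)
      have h6 : x ≠ v := fun h => hv (h ▸ hx)
      have : x ∈ X.filter (fun x => u < x ∧ x < v) := Finset.mem_filter.2 
        ⟨hx, lt_of_le_of_ne h3 h5.symm, lt_of_le_of_ne h4 h6⟩
      rw [hE] at this
      simp at this
  · obtain ⟨hxX, hux, hxv⟩ := Finset.mem_filter.1 hx
    obtain ⟨δ1, hδ1, hj⟩ := h2 x hxX
    have hev : ∀ᶠ δ : ℝ in 𝓝[>] 0, (0 < δ ∧ δ < min δ1 (min (x - u) (v - x))) := 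
      Ioo_mem_nhdsGT (by simp [hδ1, hux, hxv])
    have hfin : ∀ᶠ δ : ℝ in 𝓝[>] 0, δ ∉ ((X.image (fun y => y - x)) ∪ (X.image (fun y => x - y))).erase 0 := by
      apply Filter.Eventually.filter_mono nhdsWithin_le_nhds
      have := (((X.image (fun y => y - x)) ∪ (X.image (fun y => x - y))).erase 0).finite_toSet.isClosed.isOpen_compl
      exact this.mem_nhds (by simp)
    obtain ⟨δ, ⟨hδ0, hδ⟩, hδ2⟩ := (hev.and hfin).exists
    have ha : δ < δ1 := lt_of_lt_of_le hδ (min_le_left _ _)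
    have hb : δ < x - u := lt_of_lt_of_le hδ ((min_le_right _ _).trans (min_le_left _ _))
    have hc : δ < v - x := lt_of_lt_of_le hδ ((min_le_right _ _).trans (min_le_right _ _))
    have hp : x + δ ∉ X := by
      intro h
      apply hδ2
      refine Finset.mem_erase.2 ⟨hδ0.ne', Finset.mem_union_left _ (Finset.mem_image.2 ⟨_, h, by ring⟩)⟩
    have hm : x - δ ∉ X := by
      intro h
      apply hδ2
      refine Finset.mem_erase.2 ⟨hδ0.ne', Finset.mem_union_right _ (Finset.mem_image.2 ⟨_, h, by ring⟩)⟩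
    set A := X.filter (fun y => u < y ∧ y < x - δ)
    set B := X.filter (fun y => x + δ < y ∧ y < v)
    have hcard : A.card + B.card + 1 ≤ n := by
      refine le_trans ?_ hn
      have hd : Disjoint A B := by
        rw [Finset.disjoint_left]
        intro y hy hy'
        have h3 := (Finset.mem_filter.1 hy).2.2
        have h4 := (Finset.mem_filter.1 hy').2.1
        linarith
      have hxn : x ∉ A ∪ B := by
        intro h
        rcases Finset.mem_union.1 h with h | h
        · have h3 := (Finset.mem_filter.1 h).2.2
          linarith
        · have h3 := (Finset.mem_filter.1 h).2.1
          linarith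
      rw [← Finset.card_union_of_disjoint hd, ← Finset.card_insert_of_notMem hxn]
      apply Finset.card_le_card
      intro y hy
      rcases Finset.mem_insert.1 hy with rfl | h
      · exact hx
      rcases Finset.mem_union.1 h with h | h
      · obtain ⟨h3, h4, h5⟩ := Finset.mem_filter.1 h
        exact Finset.mem_filter.2 ⟨h3, h4, by linarith⟩
      · obtain ⟨h3, h4, h5⟩ := Finset.mem_filter.1 h
        exact Finset.mem_filter.2 ⟨h3, by linarith, h5⟩
    have i1 := ih A.card (by omega) u (x - δ) (by linarith) hu hm le_rfl
    have i2 := ih B.card (by omega) (x + δ) v (by linarith) hp hv le_rfl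
    have i3 := hj δ hδ0 ha
    have hcard' : (A.card : ℝ) + B.card + 1 ≤ n := by exact_mod_cast hcard
    rw [abs_le] at *
    constructor <;> linarith [i1.1, i1.2, i2.1, i2.2, i3.1, i3.2]

theorem coreThm (r : ℕ) (hr : 1 ≤ r) (zz : Fin r → ℂ) (hz : Function.Injective (fun i => (zz i).re))
    (a b : ℝ × ℝ → ℂ) (ha : Continuous a) (hb : Continuous b) (hne : ∀ w, a w ≠ 0 ∨ b w ≠ 0)
    (a0 b0 : ℂ) (hb0 : b0 ≠ 0) (ha0 : ∀ i, a0 ≠ zz i * b0)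
    (hside : ∀ w : ℝ × ℝ, w.1 ≤ 0 ∨ 1 ≤ w.1 ∨ w.2 ≤ 0 → a w = a0 ∧ b w = b0)
    (θ : ℝ → ℝ) (hθ : Continuous θ) (d : ℝ) (hθ0 : θ 0 = 0) (hθ1 : θ 1 = d)
    (htop : ∀ x, a (x, 1) = ex (θ x) * a0 ∧ b (x, 1) = ex (θ x) * b0)
    (Q : Finset (ℝ × ℝ)) (hQ : ∀ w, (b w = 0 ∨ ∃ i, a w = zz i * b w) ↔ w ∈ Q)
    (hQ1 : ∀ q ∈ Q, q.2 < 1) (hQx : Set.InjOn Prod.fst (Q : Set (ℝ × ℝ))) :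
    |d| * ((r : ℝ) - 1) ≤ Q.card := by
  classical
  obtain ⟨C, hCf, R, hR, sgI, hsgI, hsgIπ, hsgIs⟩ := exists_cov r hr zz hz
  set m : ℤ := (r : ℤ) - 1 with hm
  let n0 : NN zz := ⟨a0 / b0, fun i h => ha0 i (by rw [← h, div_mul_cancel₀ _ hb0])⟩
  let zf : ℝ × ℝ → NN zz := fun w => if h : ∀ i, a w / b w ≠ zz i then ⟨a w / b w, h⟩ else n0
  have hbQ : ∀ w ∉ Q, b w ≠ 0 := fun w hw h => hw ((hQ w).1 (Or.inl h))
  have hzQ : ∀ w ∉ Q, (zf w).1 = a w / b w := by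
    intro w hw
    have : ∀ i, a w / b w ≠ zz i := fun i h => hw ((hQ w).1 (Or.inr ⟨i, by
      rw [← h, div_mul_cancel₀ _ (hbQ w hw)]⟩))
    simp only [zf]
    rw [dif_pos this]
  have hzc : ContinuousOn zf (Q : Set (ℝ × ℝ))ᶜ := by
    apply contOn_sub
    refine ContinuousOn.congr (f := fun w => a w / b w) ?_ fun w hw => hzQ w hw
    exact ha.continuousOn.div hb.continuousOn fun w hw => hbQ w hw
  have hQo : IsOpen (Q : Set (ℝ × ℝ))ᶜ := Q.finite_toSet.isClosed.isOpen_compl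
  have hzat : ∀ w ∉ Q, ContinuousAt zf w := fun w hw => hzc.continuousAt (hQo.mem_nhds hw)
  have hiso : ∀ q : ℝ × ℝ, ∀ᶠ w in 𝓝[≠] q, w ∉ Q := by
    intro q
    have h1 : ∀ᶠ w in 𝓝 q, w ∉ Q.erase q := 
      (Q.erase q).finite_toSet.isClosed.isOpen_compl.mem_nhds (by simp)
    rw [eventually_nhdsWithin_iff]
    filter_upwards [h1] with w hw hwq hwQ
    exact hw (Finset.mem_erase.2 ⟨hwq, hwQ⟩)
  have hkap : ∀ q ∈ Q, HasKappa C m zf b q := by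
    intro q hq
    by_cases hbq : b q = 0
    · have haq : a q ≠ 0 := (hne q).resolve_right (fun h => h hbq)
      refine kappa_inf C m R hR sgI hsgI hsgIπ hsgIs zf a b ha hb q hbq haq ?_
      filter_upwards [hiso q] with w hw using hzQ w hw
    · obtain ⟨i, hi⟩ := ((hQ q).2 hq).resolve_left hbq
      obtain ⟨ε, hε, sg, hsg, hsgπ⟩ := hCf i
      refine kappa_fin C m zf b hb q hbq _ sg hsg hsgπ ?_
      have hc : ContinuousAt (fun w => a w / b w) q := ha.continuousAt.div hb.continuousAt hbq
      have h1 : ∀ᶠ w in 𝓝 q, dist (a w / b w) (zz i) < ε := by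
        have : dist (a q / b q) (zz i) < ε := by
          rw [hi, mul_div_cancel_right₀ _ hbq, dist_self]; exact hε
        exact (hc.dist continuousAt_const).eventually_lt continuousAt_const this
      filter_upwards [hiso q, h1.filter_mono nhdsWithin_le_nhds] with w hw hw1
      refine ⟨hzat w hw, ?_⟩
      show dist (zf w).1 (zz i) < ε
      rw [hzQ w hw]
      exact hw1
  have hsideQ : ∀ w : ℝ × ℝ, w.1 ≤ 0 ∨ 1 ≤ w.1 ∨ w.2 ≤ 0 → w ∉ Q := by
    intro w hw hwQ
    obtain ⟨h1, h2⟩ := hside w hw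
    rcases (hQ w).2 hwQ with h | ⟨i, h⟩
    · exact hb0 (h2 ▸ h)
    · rw [h1, h2] at h; exact ha0 i h
  have htopQ : ∀ x, (x, (1:ℝ)) ∉ Q := fun x h => lt_irrefl _ (hQ1 _ h)
  have hzside : ∀ w : ℝ × ℝ, w.1 ≤ 0 ∨ 1 ≤ w.1 ∨ w.2 ≤ 0 → zf w = n0 := by
    intro w hw
    apply Subtype.ext
    rw [hzQ w (hsideQ w hw), (hside w hw).1, (hside w hw).2]
  have hztop : ∀ x, zf (x, 1) = n0 := by
    intro x
    apply Subtype.ext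
    rw [hzQ _ (htopQ x), (htop x).1, (htop x).2, mul_div_mul_left _ _ (ex_ne _)]
  let D : Set (ℝ × ℝ) := {w | ∀ q ∈ Q, w.1 = q.1 → w.2 < q.2}
  have hDQ : D ⊆ (Q : Set (ℝ × ℝ))ᶜ := fun w hw hwQ => lt_irrefl _ (hw w hwQ rfl)
  have hDd : ∀ x y y', (x, y) ∈ D → y' ≤ y → (x, y') ∈ D := fun x y y' h hy q hq hx => 
    lt_of_le_of_lt hy (h q hq hx)
  have hsideD : ∀ w : ℝ × ℝ, w.1 ≤ 0 ∨ 1 ≤ w.1 ∨ w.2 ≤ 0 → w ∈ D := by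
    intro w hw q hq hx
    have h3 : 0 < q.1 ∧ q.1 < 1 ∧ 0 < q.2 := by
      have h4 : ¬ (q.1 ≤ 0 ∨ 1 ≤ q.1 ∨ q.2 ≤ 0) := fun h => hsideQ q h hq
      push Not at h4
      exact h4
    rcases hw with h | h | h
    · exact absurd h (by rw [hx]; exact not_le.2 h3.1)
    · exact absurd h (by rw [hx]; exact not_le.2 h3.2.1)
    · exact lt_of_le_of_lt h h3.2.2
  obtain ⟨e0, he0, -⟩ := C.sec n0 0
  obtain ⟨e, hec, heπ⟩ := lift_vert C.cov D hDd zf (hzc.mono hDQ) e0 (fun x y hy => by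
    rw [he0]; exact hzside _ (Or.inr (Or.inr hy)))
  obtain ⟨β, hβc, hβe⟩ := liftb_vert D hDd b hb.continuousOn (fun w hw => hbQ w (hDQ hw)) b0 hb0
    (fun x y hy => (hside _ (Or.inr (Or.inr hy))).2)
  -- the U-shaped set
  let G : Set (ℝ × ℝ) := ({0} ×ˢ Set.Icc 0 1 ∪ Set.Icc 0 1 ×ˢ {0}) ∪ {1} ×ˢ Set.Icc 0 1
  have hG : IsPreconnected G := by
    refine ((isPreconnected_singleton.prod isPreconnected_Icc).union (0, 0) ?_ ?_ 
      (isPreconnected_Icc.prod isPreconnected_singleton)).union (1, 0) ?_ ?_ 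
      (isPreconnected_singleton.prod isPreconnected_Icc)
    · simp
    · simp
    · simp
    · simp
  have hGs : ∀ w ∈ G, w.1 ≤ 0 ∨ 1 ≤ w.1 ∨ w.2 ≤ 0 := by
    rintro w ((⟨h, -⟩ | ⟨-, h⟩) | ⟨h, -⟩)
    · left; exact le_of_eq h
    · right; right; exact le_of_eq h
    · right; left; exact ge_of_eq h
  have hGD : G ⊆ D := fun w hw => hsideD w (hGs w hw)
  have g0 : ((0:ℝ), (1:ℝ)) ∈ G := by left; left; simp
  have g1 : ((1:ℝ), (1:ℝ)) ∈ G := by right; simp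
  have hee : e (1, 1) = e (0, 1) := 
    C.cov.eqOn_of_comp_eqOn hG (hec.mono hGD) (g₂ := fun _ => e (0, 1)) continuousOn_const
      (fun w hw => by
        show C.π (e w) = C.π (e (0, 1))
        rw [heπ w (hGD hw), heπ _ (hGD g0), hzside w (hGs w hw), hzside _ (hGs _ g0)]) g0 rfl g1
  have hββ : β (1, 1) = β (0, 1) := by
    obtain ⟨n, hn⟩ := log_diff hG (hβc.mono hGD) (f' := fun _ => β (0, 1)) continuousOn_const
      (fun w hw => by
        rw [hβe w (hGD hw), hβe _ (hGD g0), (hside w (hGs w hw)).2, (hside _ (hGs _ g0)).2]) g0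
    have h1 := hn _ g0
    have h2 := hn _ g1
    rw [h2, ← h1]
  let f : ℝ → ℝ := fun x => C.val (e (x, 1)) + m * (β (x, 1) - θ x).re
  have hf01 : f 1 - f 0 = - (m * d) := by
    simp only [f]
    rw [hee, hββ, hθ0, hθ1]
    simp
    ring
  have hlc : ∀ u v, u ≤ v → (∀ x ∈ Q.image Prod.fst, ¬ (u ≤ x ∧ x ≤ v)) → f u = f v := by
    intro u v huv hX
    have hTD : ∀ w ∈ Set.Icc u v ×ˢ ({1} : Set ℝ), w ∈ D := by
      rintro w ⟨hw, -⟩ q hq hx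
      exact absurd (hx ▸ hw) (hX q.1 (Finset.mem_image_of_mem _ hq))
    have hT : IsPreconnected (Set.Icc u v ×ˢ ({1} : Set ℝ)) := 
      isPreconnected_Icc.prod isPreconnected_singleton
    have t0 : (u, (1:ℝ)) ∈ Set.Icc u v ×ˢ ({1} : Set ℝ) := by simp [huv]
    have t1 : (v, (1:ℝ)) ∈ Set.Icc u v ×ˢ ({1} : Set ℝ) := by simp [huv]
    have ht : ∀ w ∈ Set.Icc u v ×ˢ ({1} : Set ℝ), w = (w.1, 1) := by
      rintro ⟨x, y⟩ ⟨-, h⟩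
      simp only [Set.mem_singleton_iff] at h
      simp [h]
    have h1 : e (v, 1) = e (u, 1) := 
      C.cov.eqOn_of_comp_eqOn hT (hec.mono hTD) (g₂ := fun _ => e (u, 1)) continuousOn_const
        (fun w hw => by
          show C.π (e w) = C.π (e (u, 1))
          rw [heπ w (hTD w hw), heπ _ (hTD _ t0), ht w hw, hztop, hztop]) t0 rfl t1
    have h2 : β (v, 1) - θ v = β (u, 1) - θ u := by
      obtain ⟨n, hn⟩ := log_diff hT (f := fun w => β w - θ w.1) 
        ((hβc.mono hTD).sub (by fun_prop)) (f' := fun _ => β (u, 1) - θ u) continuousOn_const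
        (fun w hw => by
          rw [ex_sub, ex_sub, hβe w (hTD w hw), hβe _ (hTD _ t0), ht w hw, (htop _).2, (htop _).2,
            mul_div_cancel_left₀ _ (ex_ne _), mul_div_cancel_left₀ _ (ex_ne _)]) t0
      have h3 := hn _ t0
      have h4 := hn _ t1
      rw [h4, ← h3]
    simp only [f]
    rw [h1, h2]
  have hjump : ∀ x ∈ Q.image Prod.fst, ∃ δ1 > 0, ∀ δ, 0 < δ → δ < δ1 → 
      |f (x + δ) - f (x - δ)| ≤ 1 := by
    intro x hx
    obtain ⟨⟨xs, ys⟩, hq, rfl⟩ := Finset.mem_image.1 hx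
    obtain ⟨δ0, hδ0, κ, hκ, hκπ, hκs⟩ := hkap _ hq
    have hgap : ∀ᶠ x in 𝓝 xs, x ∉ (Q.image Prod.fst).erase xs := 
      ((Q.image Prod.fst).erase xs).finite_toSet.isClosed.isOpen_compl.mem_nhds (by simp)
    obtain ⟨g, hg, hgap⟩ := Metric.eventually_nhds_iff.1 hgap
    have hys := hQ1 _ hq
    simp only at hys
    refine ⟨min δ0 g, lt_min hδ0 hg, fun δ hδp hδ => ?_⟩
    have hδ1 : δ < δ0 := lt_of_lt_of_le hδ (min_le_left _ _)
    have hδ2 : δ < g := lt_of_lt_of_le hδ (min_le_right _ _)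
    have huniq : ∀ q ∈ Q, |q.1 - xs| ≤ δ → q = (xs, ys) := by
      intro q hq' hqx
      have h3 := hgap (y := q.1) (by rw [Real.dist_eq]; linarith)
      have h4 : q.1 = xs := by
        by_contra h5
        exact h3 (Finset.mem_erase.2 ⟨h5, Finset.mem_image_of_mem _ hq'⟩)
      exact hQx hq' hq h4
    set η := min (δ0 / 2) (1 - ys) with hη
    have hη1 : η ≤ δ0 / 2 := min_le_left _ _
    have hη2 : η ≤ 1 - ys := min_le_right _ _
    have hηp : 0 < η := lt_min (by linarith) (by linarith)
    have hsub : ∀ p : (ℝ × ℝ) × ℂ, p ∈ {p : (ℝ × ℝ) × ℂ | p.1 ≠ (xs, ys) ∧ |p.1.1 - xs| ≤ δ ∧ 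
        |p.1.2 - ys| ≤ η ∧ ex p.2 = b p.1} → 
        p ∈ {p : (ℝ × ℝ) × ℂ | p.1 ≠ (xs, ys) ∧ dist p.1 (xs, ys) < δ0 ∧ ex p.2 = b p.1} := by
      rintro p ⟨h1, h2, h3, h4⟩
      refine ⟨h1, ?_, h4⟩
      rw [Prod.dist_eq]
      apply max_lt
      · rw [Real.dist_eq]; simp only; linarith
      · rw [Real.dist_eq]; simp only; linarith
    refine le_of_lt (jump C m zf b θ b0 n0 Q hzc hb hbQ hθ hztop (fun x => (htop x).2) D hDQ e hec heπ
      β hβc hβe xs ys δ η hδp hηp (by linarith) ?_ ?_ κ _ rfl (hκ.mono hsub) 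
      (fun p hp => hκπ p (hsub p hp)) (fun w β n hp => hκs w β n (hsub _ hp)))
    · intro x y hx hy q hq' hxq
      simp only at hxq
      have h5 := huniq q hq' (by rw [← hxq]; exact hx)
      subst h5
      exact hy hxq
    · intro x y hx hy hxy
      have h5 := huniq _ hxy hx
      rw [Prod.mk.injEq] at h5
      linarith [h5.2]
  have hnot : ∀ x : ℝ, x ≤ 0 ∨ 1 ≤ x → x ∉ Q.image Prod.fst := by
    intro x hx h
    obtain ⟨q, hq, rfl⟩ := Finset.mem_image.1 h
    exact hsideQ q (by tauto) hq
  have key := jump_count f (Q.image Prod.fst) hlc hjump _ 0 1 zero_le_one (hnot 0 (Or.inl le_rfl)) 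
    (hnot 1 (Or.inr le_rfl)) le_rfl
  rw [hf01, abs_neg, abs_mul] at key
  have h1 : ((Finset.filter (fun x => 0 < x ∧ x < 1) (Q.image Prod.fst)).card : ℝ) ≤ Q.card := by
    exact_mod_cast (Finset.card_filter_le _ _).trans Finset.card_image_le
  have h2 : |(m : ℝ)| = (r : ℝ) - 1 := by
    rw [hm]
    push_cast
    apply abs_of_nonneg
    have : (1 : ℝ) ≤ r := by exact_mod_cast hr
    linarith
  rw [h2] at key
  linarith

end SF

namespace SF

lemma sph_eq (y : Sphere2) : (y.1 0) ^ 2 + (y.1 1) ^ 2 + (y.1 2) ^ 2 = 1 := by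
  have h := y.2
  rw [mem_sphere_zero_iff_norm] at h
  have h2 := EuclideanSpace.norm_sq_eq y.1
  rw [h, Fin.sum_univ_three] at h2
  simpa using h2.symm

lemma sph_mem (a b c : ℝ) (h : a ^ 2 + b ^ 2 + c ^ 2 = 1) :
    (!₂[a, b, c] : EuclideanSpace ℝ (Fin 3)) ∈ Metric.sphere (0 : EuclideanSpace ℝ (Fin 3)) 1 := by
  rw [mem_sphere_zero_iff_norm, EuclideanSpace.norm_eq, Fin.sum_univ_three]
  simp [h]

lemma sph_dist (y z : Sphere2) : 
    dist y z ^ 2 = 2 - 2 * (y.1 0 * z.1 0 + y.1 1 * z.1 1 + y.1 2 * z.1 2) := by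
  rw [Subtype.dist_eq, EuclideanSpace.dist_eq, Real.sq_sqrt (by positivity), Fin.sum_univ_three]
  simp only [Real.dist_eq, sq_abs]
  linarith [sph_eq y, sph_eq z, sq_nonneg (y.1 0)]

/-- The projection onto the line of `y`. -/
def PP (y : Sphere2) (v : ℂ × ℂ) : ℂ × ℂ :=
  (((1 + (y.1 2 : ℂ)) * v.1 + ((y.1 0 : ℂ) - Complex.I * (y.1 1 : ℂ)) * v.2) / 2,
   (((y.1 0 : ℂ) + Complex.I * (y.1 1 : ℂ)) * v.1 + (1 - (y.1 2 : ℂ)) * v.2) / 2)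

lemma sph_eqC (y : Sphere2) : (y.1 0 : ℂ) ^ 2 + (y.1 1 : ℂ) ^ 2 + (y.1 2 : ℂ) ^ 2 = 1 := by
  have h := congrArg (fun x : ℝ => (x : ℂ)) (sph_eq y)
  push_cast at h
  exact h

lemma PP_idem (y : Sphere2) (v : ℂ × ℂ) : PP y (PP y v) = PP y v := by
  have h := sph_eqC y
  have hI := Complex.I_sq
  unfold PP
  ext
  · simp only
    linear_combination (v.1 / 4) * h - (v.1 / 4) * (y.1 1 : ℂ) ^ 2 * hI
  · simp only
    linear_combination (v.2 / 4) * h - (v.2 / 4) * (y.1 1 : ℂ) ^ 2 * hI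

lemma PP_PP (y z : Sphere2) (v : ℂ × ℂ) (hv : PP y v = v) : PP y (PP z v) = 
    ((1 + (y.1 0 * z.1 0 + y.1 1 * z.1 1 + y.1 2 * z.1 2 : ℝ)) / 2 : ℂ) • v := by
  have h := sph_eqC y
  have hI := Complex.I_sq
  have hI3 : Complex.I ^ 3 = - Complex.I := Complex.I_pow_three
  conv_lhs => rw [← hv]
  conv_rhs => rw [← hv]
  unfold PP
  ext
  · simp only [Prod.smul_mk, smul_eq_mul]
    push_cast
    linear_combination (norm := skip) (((1 - (z.1 2 : ℂ)) * v.1 - 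
      ((z.1 0 : ℂ) - Complex.I * (z.1 1 : ℂ)) * v.2) / 8) * h
    ring_nf
    simp only [hI, hI3]
    ring_nf
  · simp only [Prod.smul_mk, smul_eq_mul]
    push_cast
    linear_combination (norm := skip) (((1 + (z.1 2 : ℂ)) * v.2 - 
      ((z.1 0 : ℂ) + Complex.I * (z.1 1 : ℂ)) * v.1) / 8) * h
    ring_nf
    simp only [hI, hI3]
    ring_nf

lemma PP_ne (y z : Sphere2) (v : ℂ × ℂ) (hv : PP y v = v) (hv0 : v ≠ 0) (hd : dist y z < 2) :
    PP z v ≠ 0 := by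
  intro h
  have h1 := PP_PP y z v hv
  rw [h] at h1
  have h2 : PP y 0 = 0 := by simp [PP]
  rw [h2] at h1
  have h3 := (smul_eq_zero.1 h1.symm).resolve_right hv0
  have h4 : (1 + (y.1 0 * z.1 0 + y.1 1 * z.1 1 + y.1 2 * z.1 2)) / 2 = (0 : ℝ) := by
    exact_mod_cast h3
  have h5 := sph_dist y z
  have : (0:ℝ) ≤ dist y z := dist_nonneg
  nlinarith

lemma PP_uniq (y z : Sphere2) (v : ℂ × ℂ) (hv : PP y v = v) (hv' : PP z v = v) (hv0 : v ≠ 0) :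
    y = z := by
  have h1 := PP_PP y z v hv
  rw [hv', hv] at h1
  have h2 : (((1 + (y.1 0 * z.1 0 + y.1 1 * z.1 1 + y.1 2 * z.1 2 : ℝ)) / 2 : ℂ) - 1) • v = 0 := by
    rw [sub_smul, ← h1, one_smul, sub_self]
  have h3 := (smul_eq_zero.1 h2).resolve_right hv0
  have h4 : (1 + (y.1 0 * z.1 0 + y.1 1 * z.1 1 + y.1 2 * z.1 2)) / 2 - 1 = (0 : ℝ) := by
    have h7 := congrArg Complex.re h3
    simpa using h7
  have h5 := sph_dist y z
  have h6 : dist y z ^ 2 = 0 := by linarith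
  exact dist_eq_zero.1 (by simpa using h6)

lemma PP_smul (y : Sphere2) (l : ℂ) (v : ℂ × ℂ) : PP y (l • v) = l • PP y v := by
  unfold PP
  ext
  · simp only [Prod.smul_fst, Prod.smul_snd, smul_eq_mul]; ring
  · simp only [Prod.smul_fst, Prod.smul_snd, smul_eq_mul]; ring

lemma PP_cont : Continuous (fun p : Sphere2 × (ℂ × ℂ) => PP p.1 p.2) := by
  unfold PP
  fun_prop

def NV (v : ℂ × ℂ) : ℝ := Complex.normSq v.1 + Complex.normSq v.2

lemma NV_pos (v : ℂ × ℂ) (hv : v ≠ 0) : 0 < NV v := by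
  unfold NV
  have h1 := Complex.normSq_nonneg v.1
  have h2 := Complex.normSq_nonneg v.2
  by_contra h
  apply hv
  ext
  · exact Complex.normSq_eq_zero.1 (by linarith)
  · exact Complex.normSq_eq_zero.1 (by linarith)

/-- Coordinates of the Hopf map. -/
def hopc (v : ℂ × ℂ) : EuclideanSpace ℝ (Fin 3) :=
  !₂[2 * (v.1.re * v.2.re + v.1.im * v.2.im) / NV v, 2 * (v.1.re * v.2.im - v.1.im * v.2.re) / NV v,
    (Complex.normSq v.1 - Complex.normSq v.2) / NV v]

open Classical in
def hopf (v : ℂ × ℂ) : Sphere2 := if h : v ≠ 0 then ⟨hopc v, by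
    apply sph_mem
    have := (NV_pos v h).ne'
    field_simp
    simp only [NV, Complex.normSq_apply]
    ring⟩ else ⟨!₂[0, 0, 1], sph_mem _ _ _ (by norm_num)⟩

lemma hopf_val (v : ℂ × ℂ) (h : v ≠ 0) : (hopf v).1 = hopc v := by
  simp [hopf, h]

lemma hopf_cont : ContinuousOn hopf {v | v ≠ 0} := by
  apply contOn_sub
  refine ContinuousOn.congr (f := hopc) ?_ fun v hv => hopf_val v hv
  have hN : Continuous NV := by
    unfold NV
    exact (Complex.continuous_normSq.comp continuous_fst).add (Complex.continuous_normSq.comp continuous_snd)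
  have hn1 : Continuous (fun v : ℂ × ℂ => Complex.normSq v.1) := Complex.continuous_normSq.comp continuous_fst
  have hn2 : Continuous (fun v : ℂ × ℂ => Complex.normSq v.2) := Complex.continuous_normSq.comp continuous_snd
  unfold hopc
  refine (PiLp.continuous_toLp 2 _).comp_continuousOn (continuousOn_pi.2 fun i => ?_)
  fin_cases i
  · exact ContinuousOn.div (by fun_prop) hN.continuousOn fun v hv => (NV_pos v hv).ne'
  · exact ContinuousOn.div (by fun_prop) hN.continuousOn fun v hv => (NV_pos v hv).ne'
  · exact ContinuousOn.div (hn1.sub hn2).continuousOn hN.continuousOn fun v hv => (NV_pos v hv).ne'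

lemma PP_hopf (v : ℂ × ℂ) (h : v ≠ 0) : PP (hopf v) v = v := by
  have hN := (NV_pos v h).ne'
  unfold PP
  rw [hopf_val v h]
  have e0 : (hopc v).ofLp 0 = 2 * (v.1.re * v.2.re + v.1.im * v.2.im) / NV v := rfl
  have e1 : (hopc v).ofLp 1 = 2 * (v.1.re * v.2.im - v.1.im * v.2.re) / NV v := rfl
  have e2 : (hopc v).ofLp 2 = (Complex.normSq v.1 - Complex.normSq v.2) / NV v := rfl
  rw [e0, e1, e2]
  have h1 : 1 + (Complex.normSq v.1 - Complex.normSq v.2) / NV v = 2 * Complex.normSq v.1 / NV v := by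
    field_simp; unfold NV; ring
  have h2 : 1 - (Complex.normSq v.1 - Complex.normSq v.2) / NV v = 2 * Complex.normSq v.2 / NV v := by
    field_simp; unfold NV; ring
  have h1' : 1 + (((Complex.normSq v.1 - Complex.normSq v.2) / NV v : ℝ) : ℂ) = 
      ((2 * Complex.normSq v.1 / NV v : ℝ) : ℂ) := by rw [← h1, Complex.ofReal_add, Complex.ofReal_one]
  have h2' : 1 - (((Complex.normSq v.1 - Complex.normSq v.2) / NV v : ℝ) : ℂ) = 
      ((2 * Complex.normSq v.2 / NV v : ℝ) : ℂ) := by rw [← h2, Complex.ofReal_sub, Complex.ofReal_one]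
  have hNC : (NV v : ℂ) ≠ 0 := by exact_mod_cast hN
  ext : 1
  · simp only
    rw [h1']
    rw [div_eq_iff two_ne_zero]
    apply mul_right_cancel₀ hNC
    push_cast
    field_simp
    apply Complex.ext
    · simp [NV, Complex.normSq_apply]; ring
    · simp [NV, Complex.normSq_apply]; ring
  · simp only
    rw [h2']
    rw [div_eq_iff two_ne_zero]
    apply mul_right_cancel₀ hNC
    push_cast
    field_simp
    apply Complex.ext
    · simp [NV, Complex.normSq_apply]; ring
    · simp [NV, Complex.normSq_apply]; ring

lemma hopf_eq (y : Sphere2) (v : ℂ × ℂ) (h : v ≠ 0) (hy : PP y v = v) : hopf v = y :=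
  PP_uniq _ _ v (PP_hopf v h) hy h

lemma hopf_smul (l : ℂ) (v : ℂ × ℂ) (hl : l ≠ 0) (h : v ≠ 0) : hopf (l • v) = hopf v := by
  apply hopf_eq _ _ (smul_ne_zero hl h)
  rw [PP_smul, PP_hopf v h]

lemma hopf_PP (y : Sphere2) (v : ℂ × ℂ) (h : PP y v ≠ 0) : hopf (PP y v) = y :=
  hopf_eq _ _ h (PP_idem y v)

def dt (v w : ℂ × ℂ) : ℂ := v.1 * w.2 - v.2 * w.1

lemma dt_cont : Continuous (fun p : (ℂ × ℂ) × (ℂ × ℂ) => dt p.1 p.2) := by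
  unfold dt; fun_prop

/-- the scalar -/
def scl (v w : ℂ × ℂ) : ℂ := (starRingEnd ℂ v.1 * w.1 + starRingEnd ℂ v.2 * w.2) / NV v

lemma scl_smul (v w : ℂ × ℂ) (hv : v ≠ 0) (h : dt v w = 0) : scl v w • v = w := by
  have hN := (NV_pos v hv).ne'
  have hNC : (NV v : ℂ) ≠ 0 := by exact_mod_cast hN
  have e : (NV v : ℂ) = starRingEnd ℂ v.1 * v.1 + starRingEnd ℂ v.2 * v.2 := by
    unfold NV
    rw [mul_comm (starRingEnd ℂ v.1), mul_comm (starRingEnd ℂ v.2), Complex.mul_conj, Complex.mul_conj]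
    push_cast; rfl
  unfold dt at h
  unfold scl
  ext
  · simp only [Prod.smul_fst, smul_eq_mul]
    rw [div_mul_eq_mul_div, div_eq_iff hNC, e]
    linear_combination (starRingEnd ℂ v.2) * h
  · simp only [Prod.smul_snd, smul_eq_mul]
    rw [div_mul_eq_mul_div, div_eq_iff hNC, e]
    linear_combination -(starRingEnd ℂ v.1) * h

lemma hopf_iff (v w : ℂ × ℂ) (hv : v ≠ 0) (hw : w ≠ 0) : hopf v = hopf w ↔ dt v w = 0 := by
  constructor
  · intro h
    have h1 := PP_hopf v hv
    have h2 := PP_hopf w hw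
    rw [← h] at h2
    generalize hopf v = y at h1 h2
    unfold PP at h1 h2
    have a1 := congrArg Prod.fst h1
    have a2 := congrArg Prod.snd h1
    have b1 := congrArg Prod.fst h2
    have b2 := congrArg Prod.snd h2
    simp only at a1 a2 b1 b2
    unfold dt
    linear_combination -(w.2) * a1 + v.2 * b1 + w.1 * a2 - v.1 * b2
  · intro h
    have h1 := scl_smul v w hv h
    have h2 : scl v w ≠ 0 := by
      intro h3
      rw [h3, zero_smul] at h1
      exact hw h1.symm
    rw [← h1, hopf_smul _ _ h2 hv]

lemma scl_ne (v w : ℂ × ℂ) (hv : v ≠ 0) (hw : w ≠ 0) (h : dt v w = 0) : scl v w ≠ 0 := by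
  intro h3
  have h1 := scl_smul v w hv h
  rw [h3, zero_smul] at h1
  exact hw h1.symm

lemma hopf_surj (y : Sphere2) : ∃ v, v ≠ 0 ∧ hopf v = y := by
  by_cases h1 : PP y (1, 0) = 0
  · by_cases h2 : PP y (0, 1) = 0
    · exfalso
      have a := congrArg Prod.fst h1
      have b := congrArg Prod.snd h2
      simp [PP] at a b
      have : (2 : ℂ) = 0 := by linear_combination a + b
      norm_num at this
    · exact ⟨_, h2, hopf_PP _ _ h2⟩
  · exact ⟨_, h1, hopf_PP _ _ h1⟩

lemma scl_cont {A : Type} [TopologicalSpace A] {f g : A → ℂ × ℂ} (hf : Continuous f) (hg : Continuous g)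
    (h : ∀ x, f x ≠ 0) : Continuous (fun x => scl (f x) (g x)) := by
  have hN : Continuous NV := by
    unfold NV
    exact (Complex.continuous_normSq.comp continuous_fst).add (Complex.continuous_normSq.comp continuous_snd)
  unfold scl
  refine Continuous.div ?_ (Complex.continuous_ofReal.comp (hN.comp hf)) ?_
  · have := Complex.continuous_conj
    exact ((this.comp (continuous_fst.comp hf)).mul (continuous_fst.comp hg)).add
      ((this.comp (continuous_snd.comp hf)).mul (continuous_snd.comp hg))
  · intro x
    have := (NV_pos _ (h x)).ne'
    exact_mod_cast this

end SF

namespace SF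

lemma PP_cont' {A : Type} [TopologicalSpace A] (f : A → Sphere2) (g : A → ℂ × ℂ)
    (hf : Continuous f) (hg : Continuous g) : Continuous (fun s => PP (f s) (g s)) := by
  have h : Continuous (fun s => (f s, g s)) := hf.prodMk hg
  have h2 := PP_cont
  generalize PP = PQ at *
  exact h2.comp h

lemma lift_hopf {X : Type} [PseudoMetricSpace X] [CompactSpace X] (F : X × I → Sphere2)
    (hF : Continuous F) (c : Sphere2) (w : ℂ × ℂ) (hw : w ≠ 0) (hwc : hopf w = c)
    (h0 : ∀ x, F (x, 0) = c) : 
    ∃ v : X × I → ℂ × ℂ, Continuous v ∧ (∀ s, v s ≠ 0) ∧ (∀ s, hopf (v s) = F s) ∧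
      (∀ x y, (∀ y' ≤ y, F (x, y') = c) → v (x, y) = w) := by
  have huc := CompactSpace.uniformContinuous_of_continuous hF
  obtain ⟨δ, hδ, hFδ⟩ := Metric.uniformContinuous_iff.1 huc 2 (by norm_num)
  obtain ⟨N, hN⟩ := exists_nat_gt (1 / δ)
  have hN0 : (0 : ℝ) < N := lt_trans (by positivity) hN
  obtain ⟨pr, hpr⟩ : ∃ pr : X × I → ℕ → I, ∀ s j, pr s j = 
    Set.projIcc (0:ℝ) 1 zero_le_one (s.2.1 * (j / N)) := ⟨_, fun s j => rfl⟩
  have hprc : ∀ j, Continuous (fun s => pr s j) := fun j => by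
    simp only [hpr]
    apply continuous_projIcc.comp
    fun_prop
  obtain ⟨V, V0', Vs'⟩ : ∃ V : ℕ → X × I → ℂ × ℂ, V 0 = (fun _ => w) ∧ ∀ j, V (j + 1) = 
      fun s => PP (F (s.1, pr s (j + 1))) (V j s) :=
    ⟨fun j => Nat.rec (fun _ => w) (fun j Vj s => PP (F (s.1, pr s (j + 1))) (Vj s)) j, rfl, fun _ => rfl⟩
  have V0 : ∀ s, V 0 s = w := fun s => congrFun V0' s
  have Vs : ∀ j s, V (j + 1) s = PP (F (s.1, pr s (j + 1))) (V j s) := fun j s => congrFun (Vs' j) s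
  have Vc : ∀ j, Continuous (V j) := by
    intro j
    induction j with
    | zero => rw [V0']; exact continuous_const
    | succ j ih =>
      rw [Vs']
      have h1 : Continuous (fun s : X × I => F (s.1, pr s (j + 1))) := 
        hF.comp (continuous_fst.prodMk (hprc (j + 1)))
      exact PP_cont' _ _ h1 ih
  have hd : ∀ s j, dist (F (s.1, pr s j)) (F (s.1, pr s (j + 1))) < 2 := by
    intro s j
    apply hFδ
    rw [Prod.dist_eq, dist_self]
    apply max_lt hδ
    rw [hpr, hpr]
    have hl := LipschitzWith.projIcc (zero_le_one (α := ℝ))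
    refine lt_of_le_of_lt (hl.dist_le_mul _ _) ?_
    rw [Real.dist_eq]
    have e1 : s.2.1 * ((j : ℝ) / N) - s.2.1 * (((j + 1 : ℕ) : ℝ) / N) = - (s.2.1 / N) := by
      push_cast; field_simp; ring
    rw [e1, abs_neg, abs_of_nonneg (div_nonneg s.2.2.1 hN0.le), NNReal.coe_one, one_mul, 
      div_lt_iff₀ hN0]
    rw [div_lt_iff₀ hδ] at hN
    linarith [s.2.2.2]
  have hV : ∀ j s, V j s ≠ 0 ∧ PP (F (s.1, pr s j)) (V j s) = V j s := by
    intro j s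
    induction j with
    | zero => 
      refine ⟨by rw [V0]; exact hw, ?_⟩
      have : pr s 0 = 0 := by
        rw [hpr]
        simp
      rw [this, h0, V0, ← hwc, PP_hopf w hw]
    | succ j ih =>
      rw [Vs]
      exact ⟨PP_ne _ _ _ ih.2 ih.1 (hd s j), PP_idem _ _⟩
  have hprN : ∀ s, pr s N = s.2 := by
    intro s
    rw [hpr]
    rw [div_self hN0.ne', mul_one, Set.projIcc_val]
  refine ⟨V N, Vc N, fun s => (hV N s).1, fun s => ?_, fun x y hy => ?_⟩
  · have h1 := (hV N s).2
    rw [hprN] at h1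
    exact hopf_eq _ _ (hV N s).1 h1
  · have : ∀ j ≤ N, V j (x, y) = w := by
      intro j
      induction j with
      | zero => exact fun _ => V0 _
      | succ j ih =>
        intro hj
        have hle : pr (x, y) (j + 1) ≤ y := by
          have h2 : (((j + 1 : ℕ) : ℝ) / N) ≤ 1 := by
            rw [div_le_one hN0]; exact_mod_cast hj
          have h3 : y = pr (x, y) N := (hprN (x, y)).symm
          refine le_trans ?_ h3.symm.le
          rw [hpr, hpr]
          apply Set.monotone_projIcc
          apply mul_le_mul_of_nonneg_left _ y.2.1
          rw [div_self hN0.ne']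
          exact h2
        rw [Vs, ih (by omega)]
        simp only
        rw [hy _ hle, ← hwc, PP_hopf w hw]
    exact this N le_rfl

lemma loglift {A : Type} [TopologicalSpace A] (g : I × A → ℂ) (hg : Continuous g)
    (hne : ∀ s, g s ≠ 0) (h0 : ∀ a, g (0, a) = 1) : 
    ∃ G : I × A → ℂ, Continuous G ∧ (∀ s, ex (G s) = g s) ∧ ∀ a, G (0, a) = 0 := by
  let H : C(I × A, {z : ℂ // z ≠ 0}) := ⟨fun s => ⟨g s, hne s⟩, hg.subtype_mk _⟩
  have hH : ∀ a, H (0, a) = (fun y : ℂ => (⟨ex y, ex_ne y⟩ : {z : ℂ // z ≠ 0})) ((ContinuousMap.const A (0:ℂ)) a) := by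
    intro a
    apply Subtype.ext
    simp [H, h0, ex_zero]
  let G := cov_ex.liftHomotopy H (ContinuousMap.const A (0:ℂ)) hH
  refine ⟨G, G.continuous, fun s => ?_, fun a => ?_⟩
  · have := congrFun (cov_ex.liftHomotopy_lifts H _ hH) s
    exact congrArg Subtype.val this
  · exact cov_ex.liftHomotopy_zero H _ hH a

end SF

namespace SF

/-- `v` is a lift of `f` through the Hopf map, constant on three edges. -/
def IsLift (w : ℂ × ℂ) (f : I × I → Sphere2) (v : I × I → ℂ × ℂ) : Prop :=
  Continuous v ∧ (∀ s, v s ≠ 0) ∧ (∀ s, hopf (v s) = f s) ∧ (∀ y, v (0, y) = w) ∧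
    (∀ y, v (1, y) = w) ∧ ∀ x, v (x, 0) = w

def HasDeg (w : ℂ × ℂ) (f : I × I → Sphere2) (d : ℤ) : Prop :=
  ∃ v, ∃ θ : I → ℂ, IsLift w f v ∧ Continuous θ ∧ θ 0 = 0 ∧ θ 1 = d ∧ ∀ x, v (x, 1) = ex (θ x) • w

lemma log_diff_univ {A : Type} [TopologicalSpace A] [PreconnectedSpace A] {f f' : A → ℂ}
    (hf : Continuous f) (hf' : Continuous f') (hp : ∀ x, ex (f x) = ex (f' x)) (x0 : A) :
    ∃ n : ℤ, ∀ x, f x = f' x + n := by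
  obtain ⟨n, hn⟩ := log_diff isPreconnected_univ hf.continuousOn hf'.continuousOn 
    (fun x _ => hp x) (Set.mem_univ x0)
  exact ⟨n, fun x => hn x (Set.mem_univ x)⟩

lemma smul_w_inj {w : ℂ × ℂ} (hw : w ≠ 0) {a b : ℂ} (h : a • w = b • w) : a = b :=
  smul_left_injective ℂ hw h

lemma htpy_deg (w : ℂ × ℂ) (hw : w ≠ 0) (H : I × (I × I) → Sphere2) (hH : Continuous H)
    (h1 : ∀ s y, H (s, (0, y)) = hopf w) (h2 : ∀ s y, H (s, (1, y)) = hopf w)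
    (h3 : ∀ s x, H (s, (x, 0)) = hopf w) (h4 : ∀ s x, H (s, (x, 1)) = hopf w) :
    ∃ d, HasDeg w (fun p => H (0, p)) d ∧ HasDeg w (fun p => H (1, p)) d := by
  have hFc : Continuous (fun p : (I × I) × I => H (p.1.1, (p.1.2, p.2))) := by
    apply hH.comp
    fun_prop
  obtain ⟨v, hv, hv0, hvF, hvw⟩ := lift_hopf _ hFc (hopf w) w hw rfl (fun x => h3 _ _)
  have hs : ∀ p : I × I, dt w (v ((p.2, p.1), 1)) = 0 := by
    intro p
    rw [← hopf_iff _ _ hw (hv0 _), hvF]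
    exact (h4 _ _).symm
  have e0 : ∀ s y, v ((s, 0), y) = w := fun s y => hvw _ _ fun y' _ => h1 _ _
  have e1 : ∀ s y, v ((s, 1), y) = w := fun s y => hvw _ _ fun y' _ => h2 _ _
  have eb : ∀ s, v (s, 0) = w := fun s => hvw _ _ fun y' hy' => by
    have : y' = 0 := le_antisymm hy' y'.2.1
    rw [this]; exact h3 _ _
  have hsm : ∀ p : I × I, scl w (v ((p.2, p.1), 1)) • w = v ((p.2, p.1), 1) := 
    fun p => scl_smul _ _ hw (hs p)
  obtain ⟨G, hG, hGe, hG0⟩ := loglift (fun p : I × I => scl w (v ((p.2, p.1), 1)))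
    (scl_cont continuous_const (hv.comp (by fun_prop)) fun _ => hw)
    (fun p => scl_ne _ _ hw (hv0 _) (hs p)) 
    (fun a => smul_w_inj hw (by rw [hsm, e0, one_smul]))
  obtain ⟨n, hn⟩ := log_diff_univ (f := fun s => G (1, s)) (hG.comp (by fun_prop)) 
    (f' := fun _ => 0) continuous_const (fun s => smul_w_inj hw (by 
      rw [hGe, hsm, e1, ex_zero, one_smul])) 0
  have key : ∀ s, HasDeg w (fun p => H (s, p)) n := by
    intro s
    refine ⟨fun p => v ((s, p.1), p.2), fun x => G (x, s), 
      ⟨hv.comp (by fun_prop), fun p => hv0 _, fun p => hvF _, fun y => e0 _ _, fun y => e1 _ _, 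
      fun x => eb _⟩, hG.comp (by fun_prop), hG0 s, ?_, fun x => ?_⟩
    · simpa using hn s
    · simp only
      rw [hGe, hsm]
  exact ⟨n, key 0, key 1⟩

lemma HasDeg.uniq {w : ℂ × ℂ} (hw : w ≠ 0) {f : I × I → Sphere2} {d d' : ℤ} (h : HasDeg w f d)
    (h' : HasDeg w f d') : d = d' := by
  obtain ⟨v, θ, ⟨vc, v0, vf, vl, vr, vb⟩, θc, θ0, θ1, θt⟩ := h
  obtain ⟨v', θ', ⟨vc', v0', vf', vl', vr', vb'⟩, θc', θ0', θ1', θt'⟩ := h'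
  have hdt : ∀ p, dt (v p) (v' p) = 0 := by
    intro p
    rw [← hopf_iff _ _ (v0 p) (v0' p), vf, vf']
  have hsm : ∀ p, scl (v p) (v' p) • v p = v' p := fun p => scl_smul _ _ (v0 p) (hdt p)
  obtain ⟨G, hG, hGe, hG0⟩ := loglift (fun p : I × I => scl (v (p.2, p.1)) (v' (p.2, p.1)))
    (scl_cont (vc.comp (by fun_prop)) (vc'.comp (by fun_prop)) fun _ => v0 _)
    (fun p => scl_ne _ _ (v0 _) (v0' _) (hdt _)) 
    (fun a => smul_w_inj (v0 (a, 0)) (by rw [hsm, one_smul, vb, vb']))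
  have hGs : ∀ p : I × I, ex (G p) • v (p.2, p.1) = v' (p.2, p.1) := fun p => by rw [hGe, hsm]
  have side : ∀ x, (∀ y, v (x, y) = w) → (∀ y, v' (x, y) = w) → G (1, x) = 0 := by
    intro x hx hx'
    obtain ⟨n, hn⟩ := log_diff_univ (f := fun s => G (s, x)) (hG.comp (by fun_prop)) 
      (f' := fun _ => 0) continuous_const (fun s => smul_w_inj hw (by
        have := hGs (s, x)
        simp only [hx, hx'] at this
        rw [this, ex_zero, one_smul])) 0
    have h1 := hn 0
    have h2 := hn 1
    rw [h2, ← h1, hG0]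
  have g0 := side 0 vl vl'
  have g1 := side 1 vr vr'
  obtain ⟨n, hn⟩ := log_diff_univ (f := θ') θc' (f' := fun x => G (1, x) + θ x) 
    ((hG.comp (by fun_prop)).add θc) (fun x => smul_w_inj hw (by
      rw [← θt', ← hGs (1, x)]
      simp only
      rw [θt, smul_smul, ex_add])) 0
  have h1 := hn 0
  have h2 := hn 1
  rw [g0, θ0, θ0'] at h1
  rw [g1, θ1, θ1'] at h2
  have h3 : (n : ℂ) = 0 := by simpa using h1.symm
  rw [h3] at h2
  simp at h2
  exact h2.symm

lemma two_mul_mem {x : I} (h : (x : ℝ) ≤ 1 / 2) : 2 * (x : ℝ) ∈ I := ⟨by linarith [x.2.1], by linarith⟩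

/-- Horizontal gluing. -/
def glue {Y : Type} (f g : I → Y) (x : I) : Y :=
  if (x : ℝ) ≤ 1 / 2 then f (Set.projIcc 0 1 zero_le_one (2 * (x : ℝ))) else 
    g (Set.projIcc 0 1 zero_le_one (2 * (x : ℝ) - 1))

lemma glue_zero {Y : Type} (f g : I → Y) : glue f g 0 = f 0 := by
  unfold glue
  rw [if_pos (by norm_num)]
  simp

lemma glue_one {Y : Type} (f g : I → Y) : glue f g 1 = g 1 := by
  unfold glue
  rw [if_neg (by norm_num)]
  have : 2 * ((1 : I) : ℝ) - 1 = 1 := by norm_num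
  rw [this]
  simp

lemma glue_prop {Y : Type} (P : Y → Prop) (f g : I → Y) (hf : ∀ x, P (f x)) (hg : ∀ x, P (g x)) (x : I) :
    P (glue f g x) := by
  unfold glue
  split_ifs
  · exact hf _
  · exact hg _

lemma glue_cont {Y Z : Type} [TopologicalSpace Y] [TopologicalSpace Z] (f g : I × Z → Y) (hf : Continuous f) (hg : Continuous g)
    (h : ∀ z, f (1, z) = g (0, z)) : 
    Continuous (fun p : I × Z => glue (fun x => f (x, p.2)) (fun x => g (x, p.2)) p.1) := by
  unfold glue
  apply Continuous.if_le
  · exact hf.comp ((continuous_projIcc.comp (by fun_prop)).prodMk continuous_snd)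
  · exact hg.comp ((continuous_projIcc.comp (by fun_prop)).prodMk continuous_snd)
  · fun_prop
  · fun_prop
  · intro p hp
    have e1 : 2 * (p.1 : ℝ) = 1 := by rw [hp]; norm_num
    rw [e1, sub_self]
    simp [h]

lemma HasDeg.add {w : ℂ × ℂ} {f g : I × I → Sphere2} {d d' : ℤ} (hf : HasDeg w f d)
    (hg : HasDeg w g d') : 
    HasDeg w (fun p => glue (fun x => f (x, p.2)) (fun x => g (x, p.2)) p.1) (d + d') := by
  obtain ⟨v, θ, ⟨vc, v0, vf, vl, vr, vb⟩, θc, θ0, θ1, θt⟩ := hf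
  obtain ⟨v', θ', ⟨vc', v0', vf', vl', vr', vb'⟩, θc', θ0', θ1', θt'⟩ := hg
  refine ⟨fun p => glue (fun x => v (x, p.2)) (fun x => v' (x, p.2)) p.1, 
    fun x => glue θ (fun x => θ' x + d) x, ⟨?_, ?_, ?_, ?_, ?_, ?_⟩, ?_, ?_, ?_, ?_⟩
  · exact glue_cont v v' vc vc' fun z => by rw [vr, vl']
  · exact fun s => glue_prop (fun y => y ≠ 0) _ _ (fun x => v0 _) (fun x => v0' _) _
  · intro s
    unfold glue
    beta_reduce
    split_ifs
    · exact vf _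
    · exact vf' _
  · intro y; simp only [glue_zero, vl]
  · intro y; simp only [glue_one, vr']
  · intro x
    exact glue_prop (fun y => y = w) _ _ (fun x => vb _) (fun x => vb' _) _
  · have := glue_cont (Z := Unit) (fun p => θ p.1) (fun p => θ' p.1 + d) (by fun_prop) (by fun_prop) 
      (fun z => by simp [θ1, θ0'])
    exact this.comp (by fun_prop : Continuous (fun x : I => (x, ())))
  · beta_reduce; rw [glue_zero, θ0]
  · beta_reduce; rw [glue_one, θ1']; push_cast; ring
  · intro x
    unfold glue
    beta_reduce
    simp only
    split_ifs
    · exact θt _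
    · rw [θt', ex_add, ex_int, mul_one]

end SF

namespace SF

def flat {c : Sphere2} (p : GenLoop (Fin 2) Sphere2 c) : I × I → Sphere2 := fun s => p ![s.1, s.2]

lemma vec_cont : Continuous (fun s : I × I => (![s.1, s.2] : Fin 2 → I)) := by
  apply continuous_pi
  intro i
  fin_cases i
  · exact continuous_fst
  · exact continuous_snd

lemma bd0 (y : I) : (![0, y] : Fin 2 → I) ∈ Cube.boundary (Fin 2) := ⟨0, Or.inl rfl⟩
lemma bd1 (y : I) : (![1, y] : Fin 2 → I) ∈ Cube.boundary (Fin 2) := ⟨0, Or.inr rfl⟩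
lemma bd2 (x : I) : (![x, 0] : Fin 2 → I) ∈ Cube.boundary (Fin 2) := ⟨1, Or.inl rfl⟩
lemma bd3 (x : I) : (![x, 1] : Fin 2 → I) ∈ Cube.boundary (Fin 2) := ⟨1, Or.inr rfl⟩

lemma flat_homotopic {c : Sphere2} (w : ℂ × ℂ) (hw : w ≠ 0) (hwc : hopf w = c) 
    (p q : GenLoop (Fin 2) Sphere2 c) (h : GenLoop.Homotopic p q) :
    ∃ d, HasDeg w (flat p) d ∧ HasDeg w (flat q) d := by
  obtain ⟨H⟩ := h
  have hb : ∀ (s : I) (t : Fin 2 → I), t ∈ Cube.boundary (Fin 2) → H (s, t) = c := by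
    intro s t ht
    rw [H.eq_fst s ht]
    exact p.2 t ht
  obtain ⟨d, h1, h2⟩ := htpy_deg w hw (fun s => H (s.1, ![s.2.1, s.2.2])) 
    (H.continuous.comp (continuous_fst.prodMk (vec_cont.comp continuous_snd)))
    (fun s y => by rw [hwc]; exact hb _ _ (bd0 y)) (fun s y => by rw [hwc]; exact hb _ _ (bd1 y)) 
    (fun s y => by rw [hwc]; exact hb _ _ (bd2 y)) (fun s y => by rw [hwc]; exact hb _ _ (bd3 y))
  refine ⟨d, ?_, ?_⟩
  · have : (fun p => H (0, ![p.1, p.2])) = flat p := by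
      funext s
      exact H.apply_zero _
    rw [← this]; exact h1
  · have : (fun p => H (1, ![p.1, p.2])) = flat q := by
      funext s
      exact H.apply_one _
    rw [← this]; exact h2

lemma flat_trans {c : Sphere2} (p q : GenLoop (Fin 2) Sphere2 c) : 
    flat (GenLoop.transAt 0 p q) = 
      fun s => glue (fun x => flat p (x, s.2)) (fun x => flat q (x, s.2)) s.1 := by
  funext s
  have hu : ∀ z : I, Function.update (![s.1, s.2] : Fin 2 → I) 0 z = ![z, s.2] := by
    intro z
    funext i
    fin_cases i <;> simp
  have : flat (GenLoop.transAt 0 p q) s = if (((![s.1, s.2] : Fin 2 → I) 0 : I) : ℝ) ≤ 1 / 2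
      then p (Function.update ![s.1, s.2] 0 <| Set.projIcc 0 1 zero_le_one (2 * ((![s.1, s.2] : Fin 2 → I) 0 : ℝ)))
      else q (Function.update ![s.1, s.2] 0 <| Set.projIcc 0 1 zero_le_one (2 * ((![s.1, s.2] : Fin 2 → I) 0 : ℝ) - 1)) := rfl
  rw [this, hu, hu]
  rfl

theorem exists_degree (c : Sphere2) (w : ℂ × ℂ) (hw : w ≠ 0) (hwc : hopf w = c) :
    ∃ D : HomotopyGroup (Fin 2) Sphere2 c →* Multiplicative ℤ, 
      ∀ p : GenLoop (Fin 2) Sphere2 c, HasDeg w (flat p) (Multiplicative.toAdd (D (Quotient.mk _ p))) := by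
  have hex : ∀ g : HomotopyGroup (Fin 2) Sphere2 c, ∃ d : ℤ, ∀ p : GenLoop (Fin 2) Sphere2 c, 
      Quotient.mk (GenLoop.Homotopic.setoid (Fin 2) c) p = g → HasDeg w (flat p) d := by
    intro g
    induction g using Quotient.inductionOn with
    | _ q =>
    obtain ⟨d, hd, -⟩ := flat_homotopic w hw hwc q q (GenLoop.Homotopic.refl q)
    refine ⟨d, fun p hp => ?_⟩
    obtain ⟨d', h1, h2⟩ := flat_homotopic w hw hwc p q (Quotient.exact hp)
    rw [HasDeg.uniq hw hd h2]
    exact h1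
  choose D hD using hex
  refine ⟨MonoidHom.mk' (fun g => Multiplicative.ofAdd (D g)) ?_, fun p => hD _ p rfl⟩
  intro g g'
  induction g using Quotient.inductionOn with
  | _ p =>
  induction g' using Quotient.inductionOn with
  | _ q =>
  have h1 := hD _ p rfl
  have h2 := hD _ q rfl
  have hm := HomotopyGroup.mul_spec (i := (0 : Fin 2)) (p := p) (q := q)
  have h3 := hD _ (GenLoop.transAt 0 q p) hm.symm
  rw [flat_trans] at h3
  have h4 := HasDeg.uniq hw h3 (h2.add h1)
  rw [← ofAdd_add, add_comm]
  exact congrArg Multiplicative.ofAdd h4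

end SF

namespace SF

lemma ex_real_sq (x : ℝ) : (ex x).re ^ 2 + (ex x).im ^ 2 = 1 := by
  have h : ‖ex (x : ℂ)‖ = 1 := by rw [norm_ex]; simp
  have h2 := Complex.sq_norm (ex (x:ℂ))
  rw [h, Complex.normSq_apply] at h2
  linarith

lemma ex_ne_one {x : ℝ} (h0 : 0 < x) (h1 : x < 1) : ex x ≠ 1 := by
  intro h
  rw [← ex_zero, ex_eq_iff] at h
  obtain ⟨n, hn⟩ := h
  have h2 : x = (n : ℝ) := by
    have := congrArg Complex.re hn
    simpa using this
  rw [h2] at h0 h1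
  have a : 0 < n := by exact_mod_cast h0
  have b : n < 1 := by exact_mod_cast h1
  omega

lemma ex_inj {x y : ℝ} (h0 : 0 < x) (h1 : x < 1) (h0' : 0 < y) (h1' : y < 1) (h : ex x = ex y) : 
    x = y := by
  rw [ex_eq_iff] at h
  obtain ⟨n, hn⟩ := h
  have h2 : x = y + (n : ℝ) := by
    have := congrArg Complex.re hn
    simpa using this
  have a : -1 < n := by
    have : (-1 : ℝ) < n := by linarith
    exact_mod_cast this
  have b : n < 1 := by 
    have : (n : ℝ) < 1 := by linarith
    exact_mod_cast this
  have : n = 0 := by omega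
  simpa [this] using h2

lemma circ_inf : {u : ℂ | ‖u‖ = 1}.Infinite := by
  apply Set.infinite_of_injective_forall_mem (f := fun n : ℕ => ex ((1 / ((n : ℝ) + 2) : ℝ) : ℂ))
  · intro m n h
    have key : ∀ n : ℕ, 0 < 1 / ((n : ℝ) + 2) ∧ 1 / ((n : ℝ) + 2) < 1 := by
      intro n
      have : (0 : ℝ) ≤ n := Nat.cast_nonneg n
      refine ⟨by positivity, ?_⟩
      rw [div_lt_one (by positivity)]; linarith
    have h2 := ex_inj (key m).1 (key m).2 (key n).1 (key n).2 h
    have hm : (0 : ℝ) ≤ m := Nat.cast_nonneg m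
    have hn : (0 : ℝ) ≤ n := Nat.cast_nonneg n
    rw [div_eq_div_iff (by positivity) (by positivity)] at h2
    have : (m : ℝ) = n := by linarith
    exact_mod_cast this
  · intro n
    simp only [Set.mem_ofPred_eq]
    rw [norm_ex]; simp

def badu (a a' u : ℂ) : Prop := 
  (a - u) * starRingEnd ℂ (a' - u) = starRingEnd ℂ (a - u) * (a' - u)

lemma badu_fin (a a' : ℂ) (h : a ≠ a') : {u : ℂ | ‖u‖ = 1 ∧ badu a a' u}.Finite := by
  open Polynomial in
  let p : ℂ[X] := C (starRingEnd ℂ a - starRingEnd ℂ a') * X ^ 2 + 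
    C (a * starRingEnd ℂ a' - starRingEnd ℂ a * a') * X + C (a' - a)
  have hp : p ≠ 0 := by
    intro h0
    have h1 : p.coeff 0 = a' - a := by simp [p]
    rw [h0] at h1
    simp at h1
    exact h (sub_eq_zero.1 h1.symm).symm
  refine (p.roots.toFinset.finite_toSet).subset ?_
  rintro u ⟨hu, hb⟩
  simp only [Finset.mem_coe, Multiset.mem_toFinset]
  rw [Polynomial.mem_roots hp, Polynomial.IsRoot]
  simp only [p, Polynomial.eval_add, Polynomial.eval_mul, Polynomial.eval_C, Polynomial.eval_pow, Polynomial.eval_X]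
  have hc : u * starRingEnd ℂ u = 1 := by
    rw [Complex.mul_conj, ← Complex.sq_norm, hu]; simp
  unfold badu at hb
  simp only [map_sub] at hb
  linear_combination u * hb + (a - a') * hc

lemma good_u (F : Finset ℂ) : ∃ u : ℂ, ‖u‖ = 1 ∧ ∀ a ∈ F, ∀ a' ∈ F, a ≠ a' → ¬ badu a a' u := by
  have hfin : (⋃ q ∈ F.offDiag, {u : ℂ | ‖u‖ = 1 ∧ badu q.1 q.2 u}).Finite := by
    apply Set.Finite.biUnion (Finset.finite_toSet _)
    intro q hq
    apply badu_fin
    exact (Finset.mem_offDiag.1 hq).2.2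
  obtain ⟨u, hu, hu'⟩ := (circ_inf.sdiff hfin).nonempty
  refine ⟨u, hu, fun a ha a' ha' hne hb => hu' ?_⟩
  simp only [Set.mem_iUnion]
  exact ⟨(a, a'), Finset.mem_offDiag.2 ⟨ha, ha', hne⟩, hu, hb⟩

def AA (x y : ℝ) : ℂ := 1 + y * (ex x - 1)

lemma AA_norm {x y : ℝ} (h0 : 0 < x) (h1 : x < 1) (h2 : 0 < y) (h3 : y < 1) : ‖AA x y‖ < 1 := by
  have hs := ex_real_sq x
  have hne := ex_ne_one h0 h1
  have hre : (ex x).re < 1 := by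
    by_contra hh
    push Not at hh
    apply hne
    apply Complex.ext
    · simp; nlinarith
    · simp; nlinarith
  have : ‖AA x y‖ ^ 2 < 1 := by
    rw [Complex.sq_norm, Complex.normSq_apply]
    simp [AA]
    have : 0 < y * (1 - y) * (1 - (ex x).re) := by
      apply mul_pos (mul_pos h2 _) <;> linarith
    have e : (1 + y * ((ex x).re - 1)) * (1 + y * ((ex x).re - 1)) + y * (ex x).im * (y * (ex x).im) =
        1 - 2 * (y * (1 - y) * (1 - (ex x).re)) := by linear_combination y ^ 2 * hs
    linarith
  have h := norm_nonneg (AA x y)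
  nlinarith

lemma AA_inj {x y x' y' : ℝ} (h0 : 0 < x) (h1 : x < 1) (h2 : 0 < y) 
    (h0' : 0 < x') (h1' : x' < 1) (h2' : 0 < y') (h : AA x y = AA x' y') : x = x' ∧ y = y' := by
  have hs := ex_real_sq x
  have hs' := ex_real_sq x'
  have hne := ex_ne_one h0 h1
  have hre : (ex x).re < 1 := by
    by_contra hh
    push Not at hh
    apply hne
    apply Complex.ext
    · simp; nlinarith
    · simp; nlinarith
  have a := congrArg Complex.re h
  have b := congrArg Complex.im h
  simp [AA] at a b
  have hy : y = y' := by
    have e : (y * ((ex x).re - 1)) * (y - y') = 0 := by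
      have e1 : (y * ((ex x).re - 1)) ^ 2 + (y * (ex x).im) ^ 2 = - 2 * y * (y * ((ex x).re - 1)) := by
        linear_combination y ^ 2 * hs
      have e2 : (y' * ((ex x').re - 1)) ^ 2 + (y' * (ex x').im) ^ 2 = - 2 * y' * (y' * ((ex x').re - 1)) := by
        linear_combination y' ^ 2 * hs'
      rw [← a, ← b] at e2
      linarith
    have e3 : y * ((ex x).re - 1) ≠ 0 := by
      have : y * (1 - (ex x).re) > 0 := mul_pos h2 (by linarith)
      intro h; linarith
    have := (mul_eq_zero.1 e).resolve_left e3
    linarith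
  refine ⟨?_, hy⟩
  apply ex_inj h0 h1 h0' h1'
  subst hy
  unfold AA at h
  have h4 : (y : ℂ) ≠ 0 := by exact_mod_cast h2.ne'
  have h5 := mul_left_cancel₀ h4 (add_left_cancel h)
  exact sub_left_injective h5

lemma exists_dual (w : ℂ × ℂ) (hw : w ≠ 0) : ∃ w', dt w w' = 1 := by
  unfold dt
  by_cases h : w.1 = 0
  · have h2 : w.2 ≠ 0 := fun h' => hw (Prod.ext h h')
    exact ⟨(- w.2⁻¹, 0), by simp [h2]⟩
  · exact ⟨(0, w.1⁻¹), by simp [h]⟩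

/-- lift of the standard loop -/
def vv (u : ℂ) (w w' : ℂ × ℂ) (x y : ℝ) : ℂ × ℂ := 
  AA x y • w + (((1 - ‖AA x y‖ : ℝ) : ℂ) * starRingEnd ℂ u) • w'

lemma AA_cont : Continuous (fun s : ℝ × ℝ => AA s.1 s.2) := by
  unfold AA
  have := ex_cont
  fun_prop

lemma vv_cont (u w w') : Continuous (fun s : ℝ × ℝ => vv u w w' s.1 s.2) := by
  unfold vv
  have := AA_cont
  fun_prop

lemma dt1 (u w w') (h : dt w w' = 1) (x y : ℝ) : dt (vv u w w' x y) w' = AA x y := by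
  unfold dt at *
  simp [vv]
  linear_combination AA x y * h

lemma dt2 (u w w') (h : dt w w' = 1) (x y : ℝ) : 
    dt w (vv u w w' x y) = ((1 - ‖AA x y‖ : ℝ) : ℂ) * starRingEnd ℂ u := by
  unfold dt at *
  simp [vv]
  linear_combination (1 - (‖AA x y‖ : ℂ)) * starRingEnd ℂ u * h

lemma vv_ne (u w w') (hu : ‖u‖ = 1) (h : dt w w' = 1) (x y : ℝ) : vv u w w' x y ≠ 0 := by
  intro h0
  have h1 := dt1 u w w' h x y
  have h2 := dt2 u w w' h x y
  rw [h0] at h1 h2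
  simp [dt] at h1
  rw [← h1] at h2
  simp [dt] at h2
  have h3 := congrArg (starRingEnd ℂ) h2
  simp at h3
  rw [← h3] at hu
  simp at hu

lemma vv_one (u w w' x y) (h : AA x y = 1) : vv u w w' x y = w := by
  simp [vv, h]

/-- a chosen lift -/
def lft (t : Sphere2) : ℂ × ℂ := (hopf_surj t).choose
lemma lft_ne (t : Sphere2) : lft t ≠ 0 := (hopf_surj t).choose_spec.1
lemma hopf_lft (t : Sphere2) : hopf (lft t) = t := (hopf_surj t).choose_spec.2

def alp (w w' : ℂ × ℂ) (t : Sphere2) : ℂ := 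
  (dt (lft t) w' / dt w (lft t)) / (1 + ‖dt (lft t) w' / dt w (lft t)‖ : ℝ)

lemma alp_eq (u w w') (hu : ‖u‖ = 1) (h : dt w w' = 1) (x y : ℝ) (hA : ‖AA x y‖ < 1) :
    alp w w' (hopf (vv u w w' x y)) = AA x y * u := by
  set t := hopf (vv u w w' x y) with ht
  have hd : dt (lft t) (vv u w w' x y) = 0 := by
    rw [← hopf_iff _ _ (lft_ne t) (vv_ne u w w' hu h x y), hopf_lft]
  have h1 := scl_smul _ _ (lft_ne t) hd
  have h2 := scl_ne _ _ (lft_ne t) (vv_ne u w w' hu h x y) hd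
  set l := scl (lft t) (vv u w w' x y)
  have d1 := dt1 u w w' h x y
  have d2 := dt2 u w w' h x y
  rw [← h1] at d1 d2
  have hc : u * starRingEnd ℂ u = 1 := by
    rw [Complex.mul_conj, ← Complex.sq_norm, hu]; simp
  have d1' : l * dt (lft t) w' = AA x y := by rw [← d1]; simp [dt]; ring
  have d2' : l * dt w (lft t) = ((1 - ‖AA x y‖ : ℝ) : ℂ) * starRingEnd ℂ u := by
    rw [← d2]; simp [dt]; ring
  have hpos : 0 < 1 - ‖AA x y‖ := by linarith
  have hposC : ((1 - ‖AA x y‖ : ℝ) : ℂ) ≠ 0 := by exact_mod_cast hpos.ne'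
  have hcu : starRingEnd ℂ u ≠ 0 := right_ne_zero_of_mul_eq_one hc
  have hz : dt (lft t) w' / dt w (lft t) = AA x y * u / ((1 - ‖AA x y‖ : ℝ) : ℂ) := by
    rw [← mul_div_mul_left _ _ h2, d1', d2', div_eq_div_iff (mul_ne_zero hposC hcu) hposC]
    linear_combination - AA x y * ((1 - ‖AA x y‖ : ℝ) : ℂ) * hc
  unfold alp
  rw [hz]
  have hn : 1 + ‖AA x y * u / ((1 - ‖AA x y‖ : ℝ) : ℂ)‖ = (1 - ‖AA x y‖)⁻¹ := by
    rw [norm_div, norm_mul, hu, Complex.norm_real, Real.norm_eq_abs, abs_of_pos hpos]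
    field_simp
    ring
  rw [hn]
  push_cast at *
  field_simp

def osq : Set (I × I) := {s | (0:ℝ) < s.1 ∧ (s.1:ℝ) < 1 ∧ (0:ℝ) < s.2 ∧ (s.2:ℝ) < 1}

theorem exists_gamma (b : Sphere2) (w : ℂ × ℂ) (hw : w ≠ 0) (hwb : hopf w = b) (T : Finset Sphere2) :
    ∃ γ : GenLoop (Fin 2) Sphere2 b, HasDeg w (flat γ) 1 ∧ Set.InjOn (flat γ) osq ∧
      ∀ s ∈ osq, ∀ s' ∈ osq, flat γ s ∈ T → flat γ s' ∈ T → s.1 = s'.1 → s = s' := by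
  classical
  obtain ⟨w', hw'⟩ := exists_dual w hw
  obtain ⟨u, hu, hgood⟩ := good_u (T.image (alp w w'))
  have hvc := vv_cont u w w'
  have hvn := vv_ne u w w' hu hw'
  let g : C(Fin 2 → I, Sphere2) := ⟨fun t => hopf (vv u w w' (t 0) (t 1)), by
    have hc : Continuous (fun t : Fin 2 → I => vv u w w' (t 0) (t 1)) := 
      hvc.comp (f := fun t : Fin 2 → I => ((t 0 : ℝ), (t 1 : ℝ))) (by fun_prop)
    exact hopf_cont.comp_continuous hc fun t => hvn _ _⟩
  have ex0 : ex ((0:ℝ):ℂ) = 1 := by rw [Complex.ofReal_zero, ex_zero]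
  have ex1 : ex ((1:ℝ):ℂ) = 1 := by rw [Complex.ofReal_one, ex_one]
  have A0 : ∀ y, AA 0 y = 1 := fun y => by simp only [AA, ex0]; simp
  have A1 : ∀ y, AA 1 y = 1 := fun y => by simp only [AA, ex1]; simp
  have A2 : ∀ x, AA x 0 = 1 := fun x => by simp [AA]
  have A3 : ∀ x, AA x 1 = ex x := fun x => by simp [AA]
  have v3 : ∀ x, vv u w w' x 1 = ex x • w := by
    intro x
    unfold vv
    rw [A3, norm_ex]
    simp
  refine ⟨⟨g, ?_⟩, ?_, ?_⟩
  · rintro t ⟨i, hi⟩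
    change hopf (vv u w w' (t 0) (t 1)) = b
    fin_cases i
    · rcases hi with hi | hi
      · change t 0 = 0 at hi
        rw [hi, Set.Icc.coe_zero, vv_one _ _ _ _ _ (A0 _), hwb]
      · change t 0 = 1 at hi
        rw [hi, Set.Icc.coe_one, vv_one _ _ _ _ _ (A1 _), hwb]
    · rcases hi with hi | hi
      · change t 1 = 0 at hi
        rw [hi, Set.Icc.coe_zero, vv_one _ _ _ _ _ (A2 _), hwb]
      · change t 1 = 1 at hi
        rw [hi, Set.Icc.coe_one, v3, hopf_smul _ _ (ex_ne _) hw, hwb]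
  · refine ⟨fun s => vv u w w' s.1 s.2, fun x => ((x : ℝ) : ℂ), 
      ⟨hvc.comp (f := fun s : I × I => ((s.1 : ℝ), (s.2 : ℝ))) (by fun_prop), fun s => hvn _ _, fun s => rfl,
      fun y => vv_one _ _ _ _ _ (A0 _), fun y => vv_one _ _ _ _ _ (A1 _), fun x => vv_one _ _ _ _ _ (A2 _)⟩, 
      by fun_prop, by simp, by simp, fun x => v3 _⟩
  · have key : ∀ s ∈ osq, alp w w' (hopf (vv u w w' s.1 s.2)) = AA s.1 s.2 * u := by
      rintro s ⟨h1, h2, h3, h4⟩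
      exact alp_eq u w w' hu hw' _ _ (AA_norm h1 h2 h3 h4)
    have hu0 : u ≠ 0 := by
      intro h; rw [h] at hu; simp at hu
    have inj : ∀ s ∈ osq, ∀ s' ∈ osq, AA s.1 s.2 * u = AA s'.1 s'.2 * u → s = s' := by
      rintro s ⟨h1, h2, h3, h4⟩ s' ⟨h1', h2', h3', h4'⟩ h
      have := AA_inj h1 h2 h3 h1' h2' h3' (mul_right_cancel₀ hu0 h)
      exact Prod.ext (Subtype.ext this.1) (Subtype.ext this.2)
    constructor
    · intro s hs s' hs' h
      change hopf (vv u w w' s.1 s.2) = hopf (vv u w w' s'.1 s'.2) at h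
      apply inj s hs s' hs'
      rw [← key s hs, h, key s' hs']
    · intro s hs s' hs' hT hT' hx
      by_contra hne
      change hopf (vv u w w' s.1 s.2) ∈ T at hT
      change hopf (vv u w w' s'.1 s'.2) ∈ T at hT'
      refine hgood _ (Finset.mem_image_of_mem _ hT) _ (Finset.mem_image_of_mem _ hT') ?_ ?_
      · rw [key s hs, key s' hs']
        exact fun h => hne (inj s hs s' hs' h)
      · rw [key s hs, key s' hs']
        unfold badu AA
        rw [hx]
        simp only [map_sub, map_mul, map_add, map_one, Complex.conj_ofReal]
        ring

end SF

namespace SF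

lemma plucker (a a' v w : ℂ × ℂ) (h : dt a a' = 1) : 
    dt v w = dt v a' * dt a w - dt w a' * dt a v := by
  unfold dt at *
  linear_combination -(v.1 * w.2 - v.2 * w.1) * h

lemma inf_re_im (S : Set Sphere2) (hS : S.Infinite) (Z : Sphere2 → ℂ) (hZ : Set.InjOn Z S) :
    ∃ ε : ℂ, ε ≠ 0 ∧ ((fun p => (ε * Z p).re) '' S).Infinite := by
  by_contra hcon
  push Not at hcon
  have h1 := hcon 1 one_ne_zero
  have h2 := hcon (-Complex.I) (neg_ne_zero.2 Complex.I_ne_zero)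
  have h3 := h1.prod h2
  refine hS (Set.Finite.of_finite_image (f := fun p => ((Z p).re, (Z p).im)) (h3.subset ?_) ?_)
  · rintro _ ⟨p, hp, rfl⟩
    exact ⟨⟨p, hp, by simp⟩, ⟨p, hp, by simp⟩⟩
  · intro p hp q hq h
    simp only [Prod.mk.injEq] at h
    exact hZ hp hq (Complex.ext h.1 h.2)

theorem coords (S : Set Sphere2) (hS : S.Infinite) (r : ℕ) : 
    ∃ p0 ∈ S, ∃ A B : ℂ × ℂ → ℂ, Continuous A ∧ Continuous B ∧ (∀ (l : ℂ) v, A (l • v) = l * A v) ∧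
      (∀ (l : ℂ) v, B (l • v) = l * B v) ∧ (∀ v, v ≠ 0 → A v ≠ 0 ∨ B v ≠ 0) ∧ 
      (∀ v, v ≠ 0 → (B v = 0 ↔ hopf v = p0)) ∧
      ∃ (ps : Fin r → Sphere2) (zz : Fin r → ℂ), Function.Injective (fun i => (zz i).re) ∧
        (∀ i, ps i ∈ S) ∧ ∀ i v, v ≠ 0 → (A v = zz i * B v ↔ hopf v = ps i) := by
  obtain ⟨p0, hp0⟩ := hS.nonempty
  obtain ⟨v', hv'⟩ := exists_dual (lft p0) (lft_ne p0)
  set a := lft p0 with ha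
  have hS' : (S \ {p0}).Infinite := hS.sdiff (Set.finite_singleton p0)
  have hBi : ∀ v, v ≠ 0 → (dt a v = 0 ↔ hopf v = p0) := by
    intro v hv
    rw [← hopf_iff _ _ (lft_ne p0) hv, hopf_lft]
    exact eq_comm
  have hBne : ∀ p ∈ S \ {p0}, dt a (lft p) ≠ 0 := by
    intro p hp h
    rw [hBi _ (lft_ne p), hopf_lft] at h
    exact hp.2 h
  obtain ⟨ε, hε, hinf⟩ := inf_re_im _ hS' (fun p => dt (lft p) v' / dt a (lft p)) (by
    intro p hp q hq h
    simp only at h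
    rw [div_eq_div_iff (hBne p hp) (hBne q hq)] at h
    have h2 := plucker a v' (lft p) (lft q) hv'
    rw [h, sub_self, ← hopf_iff _ _ (lft_ne p) (lft_ne q), hopf_lft, hopf_lft] at h2
    exact h2)
  let em := hinf.natEmbedding
  have hch : ∀ n : ℕ, ∃ p ∈ S \ {p0}, (ε * (dt (lft p) v' / dt a (lft p))).re = (em n : ℝ) := 
    fun n => (em n).2
  choose ps hps hpe using hch
  refine ⟨p0, hp0, fun v => ε * dt v v', fun v => dt a v, ?_, ?_, ?_, ?_, ?_, hBi, 
    fun i => ps i, fun i => ε * (dt (lft (ps i)) v' / dt a (lft (ps i))), ?_, fun i => (hps i).1, ?_⟩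
  · unfold dt; fun_prop
  · unfold dt; fun_prop
  · intro l v; simp [dt]; ring
  · intro l v; simp [dt]; ring
  · intro v hv
    by_contra hcon
    push Not at hcon
    obtain ⟨h1, h2⟩ := hcon
    have h1' := (mul_eq_zero.1 h1).resolve_left hε
    have h3 := scl_smul _ _ (lft_ne p0) h2
    have h4 := scl_ne _ _ (lft_ne p0) hv h2
    rw [← h3] at h1'
    have h5 : scl (lft p0) v * dt a v' = 0 := by rw [← h1']; simp [dt, ha]; ring
    rw [hv', mul_one] at h5
    exact h4 h5
  · intro i j h
    simp only at h
    rw [hpe, hpe] at h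
    exact Fin.ext (em.injective (Subtype.ext h))
  · intro i v hv
    have hb := hBne _ (hps i)
    have h2 := plucker a v' (lft (ps i)) v hv'
    have h3 : hopf v = ps i ↔ dt (lft (ps i)) v = 0 := by
      rw [← hopf_iff _ _ (lft_ne _) hv, hopf_lft]; exact eq_comm
    rw [h3, h2]
    simp only
    rw [mul_assoc, mul_right_inj' hε, div_mul_eq_mul_div, eq_div_iff hb, sub_eq_zero]
    exact eq_comm

end SF

namespace SF

def cl (x : ℝ) : I := Set.projIcc 0 1 zero_le_one x

lemma cl_cont : Continuous cl := continuous_projIcc (h := zero_le_one)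
lemma cl_coe (x : I) : cl x = x := Set.projIcc_val _ x
lemma cl_le {x : ℝ} (h : x ≤ 0) : cl x = 0 := Set.projIcc_of_le_left _ h
lemma cl_ge {x : ℝ} (h : 1 ≤ x) : cl x = 1 := Set.projIcc_of_right_le _ h
lemma cl_in {x : ℝ} (h0 : (0 : ℝ) < cl x) (h1 : (cl x : ℝ) < 1) : (cl x : ℝ) = x := by
  by_cases h : x ≤ 0
  · rw [cl_le h] at h0; simp at h0
  by_cases h' : 1 ≤ x
  · rw [cl_ge h'] at h1; simp at h1
  push Not at h h'
  unfold cl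
  rw [Set.projIcc_of_mem _ ⟨h.le, h'.le⟩]

theorem main_bound (w : ℂ × ℂ) (hw : w ≠ 0) (f : I × I → Sphere2) (d : ℤ) (hd : HasDeg w f d)
    (p0 : Sphere2) (A B : ℂ × ℂ → ℂ) (hA : Continuous A) (hB : Continuous B) 
    (hAl : ∀ (l : ℂ) v, A (l • v) = l * A v) (hBl : ∀ (l : ℂ) v, B (l • v) = l * B v) 
    (hAB : ∀ v, v ≠ 0 → A v ≠ 0 ∨ B v ≠ 0)  (hB0 : ∀ v, v ≠ 0 → (B v = 0 ↔ hopf v = p0)) 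
    (r : ℕ) (hr : 1 ≤ r) (ps : Fin r → Sphere2) (zz : Fin r → ℂ) (hz : Function.Injective (fun i => (zz i).re))
    (hAi : ∀ i v, v ≠ 0 → (A v = zz i * B v ↔ hopf v = ps i)) 
    (hc0 : hopf w ≠ p0) (hci : ∀ i, hopf w ≠ ps i) (Q : Finset (I × I)) 
    (hQ : ∀ s, (f s = p0 ∨ ∃ i, f s = ps i) ↔ s ∈ Q) (hQo : ∀ s ∈ Q, s ∈ osq) 
    (hQx : Set.InjOn Prod.fst (Q : Set (I × I))) : |(d : ℝ)| * ((r : ℝ) - 1) ≤ Q.card := by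
  classical
  obtain ⟨v, θ, ⟨hv, hvn, hvf, hv0, hv1, hv2⟩, hθ, hθ0, hθ1, hvt⟩ := hd
  let g : ℝ × ℝ → ℂ := fun p => ex (-(Complex.I * (θ (cl p.1)).im * (cl p.2 : ℝ)))
  let V : ℝ × ℝ → ℂ × ℂ := fun p => g p • v (cl p.1, cl p.2)
  have hcl := cl_cont
  have hg : Continuous g := by
    have h1 : Continuous (fun p : ℝ × ℝ => θ (cl p.1)) := hθ.comp (hcl.comp continuous_fst)
    have h2 : Continuous (fun p : ℝ × ℝ => ((θ (cl p.1)).im : ℂ)) := 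
      Complex.continuous_ofReal.comp (Complex.continuous_im.comp h1)
    exact ex_cont.comp (by fun_prop)
  have hV : Continuous V := hg.smul (hv.comp (by fun_prop))
  have hgn : ∀ p, g p ≠ 0 := fun p => ex_ne _
  have hVn : ∀ p, V p ≠ 0 := fun p => smul_ne_zero (hgn p) (hvn _)
  have hVf : ∀ p, hopf (V p) = f (cl p.1, cl p.2) := by
    intro p
    rw [← hvf]
    exact hopf_smul _ _ (hgn p) (hvn _)
  have hside : ∀ p : ℝ × ℝ, p.1 ≤ 0 ∨ 1 ≤ p.1 ∨ p.2 ≤ 0 → V p = w := by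
    rintro p (h | h | h)
    · simp only [V, g, cl_le h, hθ0, hv0]; simp [ex_zero]
    · simp only [V, g, cl_ge h, hθ1, hv1]; simp [ex_zero]
    · simp only [V, g, cl_le h, hv2]; simp [ex_zero]
  have htop : ∀ x : ℝ, V (x, 1) = ex ((θ (cl x)).re : ℝ) • w := by
    intro x
    simp only [V, g, cl_ge le_rfl, hvt]
    rw [smul_smul, ← ex_add]
    congr 2
    apply Complex.ext <;> simp
  have hco : Function.Injective (fun s : I × I => ((s.1 : ℝ), (s.2 : ℝ))) := by
    intro s s' h
    simp only [Prod.mk.injEq] at h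
    exact Prod.ext (Subtype.ext h.1) (Subtype.ext h.2)
  have hcard : (Q.image (fun s : I × I => ((s.1 : ℝ), (s.2 : ℝ)))).card = Q.card := 
    Finset.card_image_of_injective _ hco
  rw [← hcard]
  refine coreThm r hr zz hz (fun p => A (V p)) (fun p => B (V p)) (hA.comp hV) (hB.comp hV) 
    (fun p => hAB _ (hVn p)) (A w) (B w) ?_ ?_ ?_ (fun x => (θ (cl x)).re) ?_ d ?_ ?_ ?_ _ ?_ ?_ ?_
  · rw [Ne, hB0 w hw]; exact hc0
  · intro i; rw [Ne, hAi i w hw]; exact hci i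
  · intro p hp
    simp only [hside p hp, and_self]
  · exact Complex.continuous_re.comp (hθ.comp hcl)
  · simp only [cl_le le_rfl, hθ0, Complex.zero_re]
  · simp only [cl_ge le_rfl, hθ1]; simp
  · intro x
    simp only [htop, hAl, hBl, and_self]
  · intro p
    have h1 : (B (V p) = 0 ∨ ∃ i, A (V p) = zz i * B (V p)) ↔ (cl p.1, cl p.2) ∈ Q := by
      rw [← hQ, hB0 _ (hVn p), hVf]
      simp only [hAi _ _ (hVn p), hVf]
    rw [h1, Finset.mem_image]
    constructor
    · intro h
      obtain ⟨a1, a2, a3, a4⟩ := hQo _ h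
      exact ⟨_, h, Prod.ext (cl_in a1 a2) (cl_in a3 a4)⟩
    · rintro ⟨s, hs, rfl⟩
      simpa only [cl_coe] using hs
  · intro q hq
    obtain ⟨s, hs, rfl⟩ := Finset.mem_image.1 hq
    exact (hQo s hs).2.2.2
  · intro q hq q' hq' h
    obtain ⟨s, hs, rfl⟩ := Finset.mem_image.1 hq
    obtain ⟨s', hs', rfl⟩ := Finset.mem_image.1 hq'
    have := hQx hs hs' (Subtype.ext h)
    rw [this]

end SF

namespace SF

lemma hom_inj {G : Type*} [Group G] (e : G ≃* Multiplicative ℤ) (D : G →* Multiplicative ℤ) (g : G)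
    (hg : D g ≠ 1) (β : G) (hβ : β ≠ 1) : D β ≠ 1 := by
  set a := e.symm (Multiplicative.ofAdd 1) with ha
  have key : ∀ x : G, x = a ^ (Multiplicative.toAdd (e x)) := by
    intro x
    apply e.injective
    rw [map_zpow, ha, e.apply_symm_apply, ← ofAdd_zsmul]
    simp
  have hDa : D a ≠ 1 := by
    intro h
    apply hg
    rw [key g, map_zpow, h, one_zpow]
  rw [key β, map_zpow]
  intro h
  have h2 := congrArg Multiplicative.toAdd h
  rw [toAdd_zpow, toAdd_one, smul_eq_zero] at h2
  rcases h2 with h2 | h2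
  · apply hβ
    rw [key β, h2, zpow_zero]
  · exact hDa h2

/-- The loop composed with the map. -/
def pushl (ρ : C(Sphere2, Sphere2)) {b : Sphere2} (p : GenLoop (Fin 2) Sphere2 b) : 
    GenLoop (Fin 2) Sphere2 (ρ b) := ⟨ρ.comp p.1, fun y hy => by
      simp only [ContinuousMap.comp_apply]
      rw [p.2 y hy]⟩

def mkh {b : Sphere2} (p : GenLoop (Fin 2) Sphere2 b) : HomotopyGroup (Fin 2) Sphere2 b := Quotient.mk _ p

lemma deg_bound (ρ : C(Sphere2, Sphere2)) (k : ℕ) (hdeg : HasDegree ρ (k : ℤ)) :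
    ∃ (b : Sphere2) (wb wc : ℂ × ℂ), wb ≠ 0 ∧ hopf wb = b ∧ wc ≠ 0 ∧ hopf wc = ρ b ∧
      ∀ γ : GenLoop (Fin 2) Sphere2 b, HasDeg wb (flat γ) 1 → ∃ d : ℤ, (k : ℤ) ≤ |d| ∧ 
        HasDeg wc (fun s => ρ (flat γ s)) d := by
  obtain ⟨b, e, e', he⟩ := hdeg
  obtain ⟨wb, hwb, hwb'⟩ := hopf_surj b
  obtain ⟨wc, hwc, hwc'⟩ := hopf_surj (ρ b)
  refine ⟨b, wb, wc, hwb, hwb', hwc, hwc', ?_⟩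
  intro γ hγ
  obtain ⟨Db, hDb⟩ := exists_degree b wb hwb hwb'
  obtain ⟨Dc, hDc⟩ := exists_degree (ρ b) wc hwc hwc'
  replace hDb : ∀ p, HasDeg wb (flat p) (Multiplicative.toAdd (Db (mkh p))) := hDb
  replace hDc : ∀ p, HasDeg wc (flat p) (Multiplicative.toAdd (Dc (mkh p))) := hDc
  obtain ⟨γc, hγc, -⟩ := exists_gamma (ρ b) wc hwc hwc' ∅
  have h1 : Multiplicative.toAdd (Db (mkh γ)) = 1 := HasDeg.uniq hwb (hDb γ) hγ
  have h2 : Multiplicative.toAdd (Dc (mkh γc)) = 1 := HasDeg.uniq hwc (hDc γc) hγc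
  have hne : mkh γ ≠ 1 := by
    intro h
    rw [h, map_one] at h1
    simp at h1
  have hnc : Dc (mkh γc) ≠ 1 := by
    intro h
    rw [h] at h2
    simp at h2
  set g : HomotopyGroup (Fin 2) Sphere2 b := mkh γ with hg
  set β := e'.symm (e g) with hβ
  have hβ1 : β ≠ 1 := by
    intro h
    apply hne
    apply e.injective
    apply e'.symm.injective
    rw [map_one, map_one]
    exact h
  have hDβ := hom_inj e' Dc _ hnc β hβ1
  have hpush : piTwoMap ρ b g = β ^ (k : ℤ) := by
    apply e'.injective
    rw [he, map_zpow, hβ, e'.apply_symm_apply]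
  have hD := hDc (pushl ρ γ)
  have hpp : mkh (pushl ρ γ) = piTwoMap ρ b g := rfl
  rw [hpp, hpush, map_zpow, toAdd_zpow] at hD
  refine ⟨_, ?_, hD⟩
  have h5 : Multiplicative.toAdd (Dc β) ≠ 0 := fun h => hDβ h
  have h6 := Int.one_le_abs h5
  rw [smul_eq_mul, abs_mul, abs_of_nonneg (Int.natCast_nonneg k)]
  have : (0 : ℤ) ≤ k := Int.natCast_nonneg k
  nlinarith

theorem main (ρ : C(Sphere2, Sphere2)) (k : ℕ)
    (hk : 1 ≤ k) (hdeg : HasDegree ρ (k : ℤ)) :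
    {p : Sphere2 | (ρ ⁻¹' {p}).encard < (k : ℕ∞)}.Finite := by
  classical
  obtain ⟨b, wb, wc, hwb, hwb', hwc, hwc', hd⟩ := deg_bound ρ k hdeg
  by_contra hinf
  have hinf' : ({p : Sphere2 | (ρ ⁻¹' {p}).encard < (k : ℕ∞)} \ {ρ b}).Infinite :=
    Set.Infinite.sdiff hinf (Set.finite_singleton _)
  obtain ⟨p0, hp0, A, B, hA, hB, hAl, hBl, hAB, hB0, ps, zz, hz, hps, hAi⟩ := coords _ hinf' (2 * k)
  let P : Finset Sphere2 := insert p0 (Finset.univ.image ps)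
  have hPcard : P.card ≤ 2 * k + 1 := by
    refine (Finset.card_insert_le _ _).trans ?_
    have := Finset.card_image_le (s := Finset.univ) (f := ps)
    simp at this
    omega
  have hPmem : ∀ p ∈ P, (ρ ⁻¹' {p}).encard < (k : ℕ∞) ∧ p ≠ ρ b := by
    intro p hp
    rcases Finset.mem_insert.1 hp with rfl | hp
    · exact hp0
    · obtain ⟨i, -, rfl⟩ := Finset.mem_image.1 hp
      exact hps i
  have hfib : ∀ p : Sphere2, ∃ F : Finset Sphere2, p ∈ P → (F.card ≤ k - 1 ∧ ∀ t, t ∈ F ↔ ρ t = p) := by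
    intro p
    by_cases hp : p ∈ P
    · have h1 := (hPmem p hp).1
      have hf : (ρ ⁻¹' {p}).Finite := Set.finite_of_encard_le_coe h1.le
      refine ⟨hf.toFinset, fun _ => ⟨?_, fun t => by simp⟩⟩
      rw [hf.encard_eq_coe_toFinset_card] at h1
      have : hf.toFinset.card < k := by exact_mod_cast h1
      omega
    · exact ⟨∅, fun h => absurd h hp⟩
  choose F hF using hfib
  let T : Finset Sphere2 := P.biUnion F
  have hTcard : T.card ≤ (2 * k + 1) * (k - 1) := 
    (Finset.card_biUnion_le_card_mul P F (k - 1) fun p hp => (hF p hp).1).trans 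
      (Nat.mul_le_mul_right _ hPcard)
  have hTmem : ∀ t, t ∈ T ↔ ρ t ∈ P := by
    intro t
    simp only [T, Finset.mem_biUnion]
    constructor
    · rintro ⟨p, hp, ht⟩
      rw [((hF p hp).2 t).1 ht]; exact hp
    · intro h
      exact ⟨_, h, ((hF _ h).2 t).2 rfl⟩
  obtain ⟨γ, hγ1, hγi, hγx⟩ := exists_gamma b wb hwb hwb' T
  obtain ⟨d, hkd, hdd⟩ := hd γ hγ1
  have hbd : ∀ s : I × I, s ∉ osq → flat γ s = b := by
    intro s hs
    have h0 := s.1.2.1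
    have h1 := s.1.2.2
    have h2 := s.2.2.1
    have h3 := s.2.2.2
    apply γ.2
    by_contra hcon
    apply hs
    simp only [Cube.boundary, Set.mem_ofPred_eq, not_exists, not_or] at hcon
    have c0 := hcon 0
    have c1 := hcon 1
    simp only [Matrix.cons_val_zero, Matrix.cons_val_one] at c0 c1
    exact ⟨lt_of_le_of_ne h0 fun h => c0.1 (Subtype.ext h.symm), lt_of_le_of_ne h1 fun h => c0.2 (Subtype.ext h),
      lt_of_le_of_ne h2 fun h => c1.1 (Subtype.ext h.symm), lt_of_le_of_ne h3 fun h => c1.2 (Subtype.ext h)⟩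
  have hTo : ∀ s, flat γ s ∈ T → s ∈ osq := by
    intro s hs
    by_contra h
    rw [hbd s h, hTmem] at hs
    exact (hPmem _ hs).2 rfl
  have hQfin : {s : I × I | flat γ s ∈ T}.Finite := by
    apply Set.Finite.of_finite_image (f := flat γ)
    · refine T.finite_toSet.subset ?_
      rintro _ ⟨s, hs, rfl⟩
      exact hs
    · intro s hs s' hs' h
      exact hγi (hTo s hs) (hTo s' hs') h
  have hQmem : ∀ s, s ∈ hQfin.toFinset ↔ flat γ s ∈ T := by
    intro s; simp
  have hQcard : hQfin.toFinset.card ≤ T.card := by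
    apply Finset.card_le_card_of_injOn (flat γ)
    · intro s hs
      exact (hQmem s).1 hs
    · intro s hs s' hs' h
      exact hγi (hTo s ((hQmem s).1 hs)) (hTo s' ((hQmem s').1 hs')) h
  have hfin := main_bound wc hwc _ d hdd p0 A B hA hB hAl hBl hAB hB0 (2 * k) (by omega) ps zz hz hAi 
    (by rw [hwc']; exact fun h => hp0.2 h.symm) (fun i => by rw [hwc']; exact fun h => (hps i).2 h.symm)
    hQfin.toFinset (by
      intro s
      rw [hQmem, hTmem]
      simp [P, eq_comm]) (fun s hs => hTo s ((hQmem s).1 hs)) (by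
      intro s hs s' hs' h
      have a := (hQmem s).1 hs
      have a' := (hQmem s').1 hs'
      exact hγx s (hTo s a) s' (hTo s' a') a a' h)
  have h1 : (hQfin.toFinset.card : ℝ) ≤ (2 * k + 1) * ((k : ℝ) - 1) := by
    have := hQcard.trans hTcard
    have h2 : (hQfin.toFinset.card : ℝ) ≤ (((2 * k + 1) * (k - 1) : ℕ) : ℝ) := by exact_mod_cast this
    push_cast [Nat.cast_sub hk] at h2
    exact h2
  have h2 : (k : ℝ) ≤ |(d : ℝ)| := by exact_mod_cast hkd
  have hk1 : (1 : ℝ) ≤ k := by exact_mod_cast hk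
  push_cast at hfin
  nlinarith

end SF

/-- If `ρ : S² → S²` is a continuous map of degree `k ≥ 1`, then the set of points
`p ∈ S²` whose fiber `ρ⁻¹(p)` has fewer than `k` elements is finite. -/
theorem finite_small_fibers (ρ : C(Sphere2, Sphere2)) (k : ℕ)
    (hk : 1 ≤ k) (hdeg : HasDegree ρ (k : ℤ)) :
    {p : Sphere2 | (ρ ⁻¹' {p}).encard < (k : ℕ∞)}.Finite := by
  exact SF.main ρ k hk hdeg
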